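/- If f and g are convenient and Newton nondegenerate polynomials in ℬ having the same Newton polytope P, then for every α ∈ ℚ one has dim_ℂ gr^𝒩_α(ℬ/ℒ(f)) = dim_ℂ gr^𝒩_α(ℬ/ℒ(g)), where ℒ(f) (resp. ℒ(g)) is the ideal generated by u₁ ∂f/∂u₁,…,uₙ ∂f/∂uₙ (resp. u₁ ∂g/∂u₁,…,uₙ ∂g/∂uₙ). In other words, the toric Newton spectrum of a convenient and Newton nondegenerate polynomial depends only on its Newton polytope. -/

import Mathlib

open MvPolynomial

namespace ToricNewton

section
variable {σ : Type*} [Fintype σ] [DecidableEq σ]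

/-- Coercion of a lattice point of `ℕ^σ` into `ℝ^σ`. -/
def natToR (v : σ → ℕ) : σ → ℝ := fun i => (v i : ℝ)

/-- Coercion of an exponent (finitely supported) into `ℝ^σ`. -/
def toR (m : σ →₀ ℕ) : σ → ℝ := fun i => (m i : ℝ)

/-- The Newton polytope of a polynomial: the convex hull of `{0} ∪ supp f`. -/
noncomputable def newtonPolytope (f : MvPolynomial σ ℂ) : Set (σ → ℝ) :=
  convexHull ℝ ({0} ∪ (toR '' (f.support : Set (σ →₀ ℕ))))

/-- The Newton function `ν`, which for a convenient polynomial is the gauge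
(Minkowski functional) of the Newton polytope. -/
noncomputable def nu (f : MvPolynomial σ ℂ) (x : σ → ℝ) : ℝ :=
  gauge (newtonPolytope f) x

/-- `f` is convenient if for each variable `i` some pure power `uᵢ^k`, `k ≥ 1`,
occurs in `f` with nonzero coefficient. -/
def Convenient (f : MvPolynomial σ ℂ) : Prop :=
  ∀ i : σ, ∃ k : ℕ, 1 ≤ k ∧ f.coeff (Finsupp.single i k) ≠ 0

/-- `Δ` is a (nonempty exposed) closed face of `P`. -/
def IsFace (P Δ : Set (σ → ℝ)) : Prop :=
  Δ.Nonempty ∧ ∃ (l : (σ → ℝ) →ₗ[ℝ] ℝ) (c : ℝ),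
    (∀ x ∈ P, l x ≤ c) ∧ Δ = {x ∈ P | l x = c}

/-- A face of the Newton boundary: a closed face of the Newton polytope not
containing the origin. -/
def NBFace (f : MvPolynomial σ ℂ) (Δ : Set (σ → ℝ)) : Prop :=
  IsFace (newtonPolytope f) Δ ∧ (0 : σ → ℝ) ∉ Δ

open Classical in
/-- The truncation `g_Δ` of `g` to the monomials whose exponents lie in `Δ`. -/
noncomputable def faceRestrict (Δ : Set (σ → ℝ)) (g : MvPolynomial σ ℂ) : MvPolynomial σ ℂ :=
  ∑ m ∈ g.support, if toR m ∈ Δ then monomial m (g.coeff m) else 0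

/-- `f` is Newton nondegenerate: for every closed face `Δ` of the Newton boundary
the system `(u₁ ∂f/∂u₁)_Δ = ⋯ = (uₙ ∂f/∂uₙ)_Δ = 0` has no solution in `(ℂ*)ⁿ`. -/
def Nondegenerate (f : MvPolynomial σ ℂ) : Prop :=
  ∀ Δ : Set (σ → ℝ), NBFace f Δ →
    ¬ ∃ x : σ → ℂ, (∀ i, x i ≠ 0) ∧
        ∀ i, eval x (faceRestrict Δ (X i * pderiv i f)) = 0

/-- The ideal `ℒ` generated by the `uᵢ ∂f/∂uᵢ`. -/
noncomputable def LIdeal (f : MvPolynomial σ ℂ) : Ideal (MvPolynomial σ ℂ) :=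
  Ideal.span (Set.range fun i => X i * pderiv i f)

/-- The Jacobian ideal `ℐ` generated by the `∂f/∂uᵢ`. -/
noncomputable def IIdeal (f : MvPolynomial σ ℂ) : Ideal (MvPolynomial σ ℂ) :=
  Ideal.span (Set.range fun i => pderiv i f)

/-- The Newton filtration `𝒩_α ℬ`: the span of the monomials `u^m` with `ν(m) ≤ α`. -/
noncomputable def Nle (f : MvPolynomial σ ℂ) (α : ℝ) : Submodule ℂ (MvPolynomial σ ℂ) where
  carrier := {g | ∀ m ∈ g.support, nu f (toR m) ≤ α}
  zero_mem' := by simp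
  add_mem' := by
    intro a b ha hb m hm
    rcases Finset.mem_union.mp (MvPolynomial.support_add hm) with h | h
    · exact ha m h
    · exact hb m h
  smul_mem' := by
    intro c a ha m hm
    exact ha m (MvPolynomial.support_smul hm)

/-- The filtration `𝒩_{<α} ℬ`. -/
noncomputable def Nlt (f : MvPolynomial σ ℂ) (α : ℝ) : Submodule ℂ (MvPolynomial σ ℂ) where
  carrier := {g | ∀ m ∈ g.support, nu f (toR m) < α}
  zero_mem' := by simp
  add_mem' := by
    intro a b ha hb m hm
    rcases Finset.mem_union.mp (MvPolynomial.support_add hm) with h | h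
    · exact ha m h
    · exact hb m h
  smul_mem' := by
    intro c a ha m hm
    exact ha m (MvPolynomial.support_smul hm)

/-- The twisted filtration `W_α ℬ`: the span of the monomials `u^m` with
`ν(m + (1,…,1)) ≤ α`. -/
noncomputable def Wle (f : MvPolynomial σ ℂ) (α : ℝ) : Submodule ℂ (MvPolynomial σ ℂ) where
  carrier := {g | ∀ m ∈ g.support, nu f (toR m + 1) ≤ α}
  zero_mem' := by simp
  add_mem' := by
    intro a b ha hb m hm
    rcases Finset.mem_union.mp (MvPolynomial.support_add hm) with h | h
    · exact ha m h
    · exact hb m h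
  smul_mem' := by
    intro c a ha m hm
    exact ha m (MvPolynomial.support_smul hm)

/-- The twisted filtration `W_{<α} ℬ`. -/
noncomputable def Wlt (f : MvPolynomial σ ℂ) (α : ℝ) : Submodule ℂ (MvPolynomial σ ℂ) where
  carrier := {g | ∀ m ∈ g.support, nu f (toR m + 1) < α}
  zero_mem' := by simp
  add_mem' := by
    intro a b ha hb m hm
    rcases Finset.mem_union.mp (MvPolynomial.support_add hm) with h | h
    · exact ha m h
    · exact hb m h
  smul_mem' := by
    intro c a ha m hm
    exact ha m (MvPolynomial.support_smul hm)

/-- The graded piece `gr^𝒩_α(ℬ/ℒ) = (𝒩_α ℬ + ℒ)/(𝒩_{<α} ℬ + ℒ)`, realized as the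
image of `𝒩_α ℬ + ℒ` in `ℬ/(𝒩_{<α} ℬ + ℒ)`. -/
noncomputable def grN (f : MvPolynomial σ ℂ) (α : ℝ) :
    Submodule ℂ (MvPolynomial σ ℂ ⧸ (Nlt f α ⊔ (LIdeal f).restrictScalars ℂ)) :=
  Submodule.map (Nlt f α ⊔ (LIdeal f).restrictScalars ℂ).mkQ
    (Nle f α ⊔ (LIdeal f).restrictScalars ℂ)

/-- `dim_ℂ gr^𝒩_α(ℬ/ℒ)`. -/
noncomputable def grDim (f : MvPolynomial σ ℂ) (α : ℝ) : ℕ :=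
  Module.finrank ℂ (grN f α)

/-- The graded piece `gr^W_α(ℬ/ℐ) = (W_α ℬ + ℐ)/(W_{<α} ℬ + ℐ)`. -/
noncomputable def grW (f : MvPolynomial σ ℂ) (α : ℝ) :
    Submodule ℂ (MvPolynomial σ ℂ ⧸ (Wlt f α ⊔ (IIdeal f).restrictScalars ℂ)) :=
  Submodule.map (Wlt f α ⊔ (IIdeal f).restrictScalars ℂ).mkQ
    (Wle f α ⊔ (IIdeal f).restrictScalars ℂ)

/-- `dim_ℂ gr^W_α(ℬ/ℐ)`. -/
noncomputable def grWDim (f : MvPolynomial σ ℂ) (α : ℝ) : ℕ :=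
  Module.finrank ℂ (grW f α)

/-- The dimension of a face, i.e. of the direction of its affine span. -/
noncomputable def faceDim (Δ : Set (σ → ℝ)) : ℕ :=
  Module.finrank ℝ (affineSpan ℝ Δ).direction

/-- `Δ` is a simplex: the convex hull of an affinely independent family. -/
def IsSimplex (Δ : Set (σ → ℝ)) : Prop :=
  ∃ (k : ℕ) (p : Fin (k + 1) → (σ → ℝ)), AffineIndependent ℝ p ∧ Δ = convexHull ℝ (Set.range p)

/-- The union of the coordinate hyperplanes. -/
def coordHyperplanes (σ : Type*) : Set (σ → ℝ) := ⋃ i : σ, {x : σ → ℝ | x i = 0}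

/-- `Box(Δ)`: the set of combinations `Σ q_ℓ b_ℓ`, `q_ℓ ∈ [0,1)`, of the vertices
(extreme points) of `Δ`. -/
def Box (Δ : Set (σ → ℝ)) : Set (σ → ℝ) :=
  {x | ∃ s : Finset (σ → ℝ), ↑s ⊆ Δ.extremePoints ℝ ∧
      ∃ q : (σ → ℝ) → ℝ, (∀ b ∈ s, 0 ≤ q b ∧ q b < 1) ∧ x = ∑ b ∈ s, q b • b}

/-- `Δ ∈ ℱ(P)`: a closed face of the Newton polytope of `f` not contained in the
union of the coordinate hyperplanes. -/
def FcalMem (f : MvPolynomial σ ℂ) (Δ : Set (σ → ℝ)) : Prop :=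
  IsFace (newtonPolytope f) Δ ∧ ¬ Δ ⊆ coordHyperplanes σ

/-- `Box(P)`: the union of `Box(Δ)` over the closed faces of the Newton boundary
not contained in the union of the coordinate hyperplanes. -/
def BoxP (f : MvPolynomial σ ℂ) : Set (σ → ℝ) :=
  ⋃ Δ ∈ {Δ : Set (σ → ℝ) | NBFace f Δ ∧ ¬ Δ ⊆ coordHyperplanes σ}, Box Δ

/-- The cone `ℝ₊·Δ` over `Δ`. -/
def cone0 (Δ : Set (σ → ℝ)) : Set (σ → ℝ) :=
  {x | ∃ t : ℝ, 0 ≤ t ∧ ∃ y ∈ Δ, x = t • y}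

/-- The restriction of `f` obtained by setting the variables in `S` to zero. -/
noncomputable def restrictZero (S : Finset σ) (f : MvPolynomial σ ℂ) :
    MvPolynomial {j : σ // j ∉ S} ℂ :=
  aeval (fun j : σ => if h : j ∉ S then X (⟨j, h⟩ : {j : σ // j ∉ S}) else 0) f

end

end ToricNewton

/-!
Put `hᵢ = uᵢ ∂f/∂uᵢ`, polynomials of weight at most `1` for the Newton function `ν`.

Assign to each `v ∈ {0} ∪ supp f` a variable, and consider the ideal of the polynomials in these
variables whose value at the monomials `u^v` drops in weight modulo the `hᵢ`. A nonzero common zero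
`χ` of this ideal is supported on the points of a face of the Newton boundary (Gordan's theorem of
the alternative), where it is given by a torus point (`ℂˣ` is divisible), and there all the
`(hᵢ)_Δ` vanish. Nondegeneracy excludes this, so by the Nullstellensatz, for `N` large, every
`u^{Nv}` has weight less than `N` modulo `∑ hᵢ 𝒩_{N-1}`. It follows that `ℬ` is finite over `ℂ[h]`,
compatibly with the filtrations, and that the `hᵢ` are algebraically independent.

The main point is that `∏_{i ∉ J} hᵢ · r ∈ (hᵢ)_{i ∈ J}` forces `r ∈ ∑_{i ∈ J} hᵢ 𝒩_{α-1}` for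
`r ∈ 𝒩_α`. Failure of this statement descends, along with the relations for the `u^{Nv}`, to a
finite field, where it is refuted as follows. For a power `q` of the order of the field, raise the
hypothesis to the power `q`. By generic freeness over the polynomial ring in the `hᵢ`, there is a
nonzero `c` independent of `q` such that `c r^q ∈ ∑_{i ∈ J} hᵢ^q 𝒩_{q(α-1)+D}` with `D` independent
of `q`. Since `hᵢ^q` is a polynomial in the `uᵢ^q`, a Cartier operator which extracts a
coefficient of `c` removes the exponents `q`, and the error `D / q` vanishes for large `q`.

Consequently the dimensions of the `∑_{i ∈ J} hᵢ 𝒩_γ` satisfy a recursion in `J` which involves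
only those of the `𝒩_γ`, hence only the polytope; and the graded pieces of `ℬ/ℒ(f)` are computed
from the case where `J` is everything.
-/

namespace ToricNewton

open Filter Topology

/-! ### Weight filtrations -/

theorem mem_span_image_mul_iff_exists_sum {R A ι : Type*} [CommRing R] [CommRing A] [Algebra R A]
    {b : ι → A} {J : Finset ι} {N : Submodule R A} {x : A} :
    x ∈ Submodule.span R (b '' J) * N ↔ ∃ s : ι → A, (∀ i, s i ∈ N) ∧ ∑ i ∈ J, b i * s i = x := by
  classical
  constructor
  · induction J using Finset.induction_on generalizing x with
    | empty => simpa [eq_comm] using fun hx => ⟨⟨0, fun _ => zero_mem _⟩, hx⟩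
    | insert j J hj ih =>
      simp only [Finset.coe_insert, Set.image_insert_eq, Submodule.span_insert, Submodule.sup_mul,
        Submodule.mem_sup, Submodule.mem_span_singleton_mul]
      rintro ⟨_, ⟨y, hy, rfl⟩, z, hz, rfl⟩
      obtain ⟨s, hs, rfl⟩ := ih hz
      refine ⟨Function.update s j y, fun i => ?_, ?_⟩
      · rcases eq_or_ne i j with rfl | hij
        · rwa [Function.update_self]
        · rw [Function.update_of_ne hij]
          exact hs i
      · rw [Finset.sum_insert hj, Function.update_self]
        exact congrArg _ (Finset.sum_congr rfl fun i hi => by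
          rw [Function.update_of_ne (ne_of_mem_of_not_mem hi hj)])
  · rintro ⟨s, hs, rfl⟩
    exact Submodule.sum_mem _ fun i hi => Submodule.mul_mem_mul
      (Submodule.subset_span (Set.mem_image_of_mem b hi)) (hs i)

section WeightFiltration

variable {σ τ : Type*} {R : Type*} [CommRing R] {ν : (σ →₀ ℕ) → ℝ}
  {h : τ → MvPolynomial σ R}

/-- The filtration of a polynomial ring by a weight function `ν` on exponents: polynomials all of
whose monomials have weight at most `α`. -/
noncomputable def weightLE (R : Type*) [CommRing R] (ν : (σ →₀ ℕ) → ℝ) (α : ℝ) :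
    Submodule R (MvPolynomial σ R) :=
  restrictSupport R {m | ν m ≤ α}

/-- The strict version of `weightLE`. -/
noncomputable def weightLT (R : Type*) [CommRing R] (ν : (σ →₀ ℕ) → ℝ) (α : ℝ) :
    Submodule R (MvPolynomial σ R) :=
  restrictSupport R {m | ν m < α}

/-- The submodule `∑_{i ∈ J} hᵢ 𝒩_γ`, where `𝒩` is the filtration `weightLE`. -/
noncomputable def filteredSpan (ν : (σ →₀ ℕ) → ℝ) (h : τ → MvPolynomial σ R) (J : Set τ) (γ : ℝ) :
    Submodule R (MvPolynomial σ R) :=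
  Submodule.span R (h '' J) * weightLE R ν γ

/-- The polynomials which, modulo combinations `∑ hᵢ sᵢ` with `sᵢ` of weight at most `e - 1`, have
weight less than `e`. -/
noncomputable def lowerPart (ν : (σ →₀ ℕ) → ℝ) (h : τ → MvPolynomial σ R) (e : ℝ) :
    Submodule R (MvPolynomial σ R) :=
  weightLT R ν e ⊔ filteredSpan ν h Set.univ (e - 1)

theorem weightLE_mono : Monotone (weightLE R ν) := fun _ _ hαβ =>
  restrictSupport_mono _ fun _ hm => le_trans hm hαβ

theorem weightLT_mono : Monotone (weightLT R ν) := fun _ _ hαβ =>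
  restrictSupport_mono _ fun _ hm => lt_of_lt_of_le hm hαβ

theorem weightLT_le_weightLE {α : ℝ} : weightLT R ν α ≤ weightLE R ν α :=
  restrictSupport_mono _ fun m (hm : ν m < α) => hm.le

theorem mem_weightLE_iff {α : ℝ} {p : MvPolynomial σ R} :
    p ∈ weightLE R ν α ↔ ∀ m ∈ p.support, ν m ≤ α := Iff.rfl

theorem monomial_mem_weightLE {α : ℝ} {m : σ →₀ ℕ} (hm : ν m ≤ α) (c : R) :
    monomial m c ∈ weightLE R ν α :=
  (monomial_mem_restrictSupport R).2 (Or.inl hm)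

theorem eventually_mem_weightLE (p : MvPolynomial σ R) : ∀ᶠ α in atTop, p ∈ weightLE R ν α :=
  (Filter.eventually_all_finset p.support).2 fun m _ => eventually_ge_atTop (ν m)

theorem weightLE_le_iff {α : ℝ} {S : Submodule R (MvPolynomial σ R)} :
    weightLE R ν α ≤ S ↔ ∀ m, ν m ≤ α → monomial m 1 ∈ S := by
  rw [weightLE, restrictSupport_eq_span, Submodule.span_le, Set.image_subset_iff]
  rfl

theorem weightLT_le_iff {α : ℝ} {S : Submodule R (MvPolynomial σ R)} :
    weightLT R ν α ≤ S ↔ ∀ m, ν m < α → monomial m 1 ∈ S := by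
  rw [weightLT, restrictSupport_eq_span, Submodule.span_le, Set.image_subset_iff]
  rfl

theorem weightLE_mul_le (hν : ∀ a b, ν (a + b) ≤ ν a + ν b) (α β : ℝ) :
    weightLE R ν α * weightLE R ν β ≤ weightLE R ν (α + β) := by
  rw [weightLE, weightLE, ← restrictSupport_add]
  refine restrictSupport_mono _ ?_
  rintro _ ⟨a, ha, b, hb, rfl⟩
  exact (hν a b).trans (add_le_add ha hb)

theorem pow_mem_weightLE (hν : ∀ a b, ν (a + b) ≤ ν a + ν b) (h0 : ν 0 ≤ 0) {α : ℝ}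
    {p : MvPolynomial σ R} (hp : p ∈ weightLE R ν α) (n : ℕ) : p ^ n ∈ weightLE R ν (n * α) := by
  induction n with
  | zero => simpa using monomial_mem_weightLE h0 (1 : R)
  | succ n ih =>
    rw [pow_succ, Nat.cast_succ, add_one_mul]
    exact weightLE_mul_le hν _ _ (Submodule.mul_mem_mul ih hp)

theorem weightLE_mul_weightLT_le (hν : ∀ a b, ν (a + b) ≤ ν a + ν b) (α β : ℝ) :
    weightLE R ν α * weightLT R ν β ≤ weightLT R ν (α + β) := by
  rw [weightLE, weightLT, ← restrictSupport_add]
  refine restrictSupport_mono _ ?_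
  rintro _ ⟨a, ha, b, hb, rfl⟩
  exact (hν a b).trans_lt (add_lt_add_of_le_of_lt ha hb)

theorem filteredSpan_le_iff {J : Set τ} {γ : ℝ} {S : Submodule R (MvPolynomial σ R)} :
    filteredSpan ν h J γ ≤ S ↔ ∀ i ∈ J, ∀ m, ν m ≤ γ → h i * monomial m 1 ∈ S := by
  rw [filteredSpan, weightLE, restrictSupport_eq_span, Submodule.span_mul_span, Submodule.span_le,
    Set.mul_subset_iff, Set.forall_mem_image]
  simp only [Set.forall_mem_image, Set.mem_ofPred_eq, SetLike.mem_coe]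

theorem filteredSpan_mono {J J' : Set τ} {γ γ' : ℝ} (hJ : J ⊆ J') (hγ : γ ≤ γ') :
    filteredSpan ν h J γ ≤ filteredSpan ν h J' γ' :=
  mul_le_mul' (Submodule.span_mono (Set.image_mono hJ)) (weightLE_mono hγ)

theorem filteredSpan_insert (j : τ) (J : Set τ) (γ : ℝ) :
    filteredSpan ν h (insert j J) γ =
      (weightLE R ν γ).map (LinearMap.mulLeft R (h j)) ⊔ filteredSpan ν h J γ := by
  ext x
  rw [filteredSpan, Set.image_insert_eq, Submodule.span_insert, Submodule.sup_mul,
    Submodule.mem_sup, Submodule.mem_sup]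
  simp only [Submodule.mem_span_singleton_mul, Submodule.mem_map, LinearMap.mulLeft_apply,
    filteredSpan]

theorem weightLE_mul_filteredSpan_le (hν : ∀ a b, ν (a + b) ≤ ν a + ν b) (J : Set τ) (δ γ : ℝ) :
    weightLE R ν δ * filteredSpan ν h J γ ≤ filteredSpan ν h J (δ + γ) := by
  rw [filteredSpan, ← mul_assoc, mul_comm (weightLE R ν δ), mul_assoc]
  exact mul_le_mul_right (weightLE_mul_le hν δ γ) _

theorem filteredSpan_le_weightLE (hν : ∀ a b, ν (a + b) ≤ ν a + ν b)
    (h1 : ∀ i, h i ∈ weightLE R ν 1) (J : Set τ) (γ : ℝ) :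
    filteredSpan ν h J (γ - 1) ≤ weightLE R ν γ := by
  have hJ : Submodule.span R (h '' J) ≤ weightLE R ν 1 :=
    Submodule.span_le.2 (Set.image_subset_iff.2 fun i _ => h1 i)
  calc filteredSpan ν h J (γ - 1)
      ≤ weightLE R ν 1 * weightLE R ν (γ - 1) := mul_le_mul_left hJ _
    _ ≤ weightLE R ν (1 + (γ - 1)) := weightLE_mul_le hν _ _
    _ = weightLE R ν γ := by rw [add_sub_cancel]

theorem lowerPart_mono : Monotone (lowerPart ν h) := fun _ _ hαβ =>
  sup_le_sup (weightLT_mono hαβ) (filteredSpan_mono subset_rfl (sub_le_sub_right hαβ 1))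

theorem weightLE_mul_lowerPart_le (hν : ∀ a b, ν (a + b) ≤ ν a + ν b) (δ e : ℝ) :
    weightLE R ν δ * lowerPart ν h e ≤ lowerPart ν h (δ + e) := by
  rw [lowerPart, Submodule.mul_sup, lowerPart, add_sub_assoc]
  exact sup_le_sup (weightLE_mul_weightLT_le hν δ e) (weightLE_mul_filteredSpan_le hν _ _ _)

end WeightFiltration

section Generation

variable {σ τ : Type*} {R : Type*} [CommRing R] {ν : (σ →₀ ℕ) → ℝ}
  {h : τ → MvPolynomial σ R}

/-- The properties of the Newton function `ν` of a convenient polynomial with support `V` on which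
the algebraic part of the argument rests. The last two express that `ν` is the gauge of the convex
hull of `V ∪ {0}`: a vector of large weight is a sum of elements of `V`, up to a bounded error,
and the closed polytope `β • P` contains `m` as soon as it contains limits of points
`(q • m + a) / q` of `(β + C / q) • P`. -/
structure IsNewtonWeight (ν : (σ →₀ ℕ) → ℝ) (V : Finset (σ →₀ ℕ)) : Prop where
  nonneg : ∀ m, 0 ≤ ν m
  add_le : ∀ a b, ν (a + b) ≤ ν a + ν b
  exists_apply_le : ∃ L : ℝ, 0 ≤ L ∧ ∀ m i, (m i : ℝ) ≤ L * ν m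
  exists_add_nsmul : ∀ N : ℕ, ∃ C : ℝ, ∀ m, C < ν m →
    ∃ v ∈ V, ∃ m', m = m' + N • v ∧ ν m' + N ≤ ν m
  le_of_frequently : ∀ (m a : σ →₀ ℕ) (β C : ℝ),
    (∃ᶠ q : ℕ in atTop, ν (q • m + a) ≤ q * β + C) → ν m ≤ β

theorem finite_setOf_forall_apply_le [Finite σ] (B : ℝ) :
    {m : σ →₀ ℕ | ∀ i, (m i : ℝ) ≤ B}.Finite := by
  classical
  exact (Set.finite_Icc 0 (Finsupp.equivFunOnFinite.symm fun _ : σ => ⌊B⌋₊)).subset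
    fun _ hm => ⟨zero_le, fun i => Nat.le_floor (hm i)⟩

theorem IsNewtonWeight.finite_setOf_le [Finite σ] {V : Finset (σ →₀ ℕ)}
    (hν : IsNewtonWeight ν V) (β : ℝ) : {m | ν m ≤ β}.Finite := by
  obtain ⟨L, hL, hcoord⟩ := hν.exists_apply_le
  exact (finite_setOf_forall_apply_le (L * β)).subset fun m hm i =>
    (hcoord m i).trans (mul_le_mul_of_nonneg_left hm hL)

theorem IsNewtonWeight.map_zero_le {V : Finset (σ →₀ ℕ)} (hν : IsNewtonWeight ν V) : ν 0 ≤ 0 :=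
  hν.le_of_frequently 0 0 0 (ν 0) (Frequently.of_forall fun q => by simp)

theorem wellFounded_of_finite_setOf_le {α : Type*} {ν : α → ℝ}
    (hν : ∀ β, {m | ν m ≤ β}.Finite) : WellFounded fun a b => ν a < ν b := by
  refine Subrelation.wf (fun {a b} hab => ?_) (measure fun m => {k | ν k ≤ ν m}.ncard).wf
  exact Set.ncard_lt_ncard
    ⟨fun k hk => le_trans hk hab.le, fun hsub => (hsub (le_refl (ν b))).not_gt hab⟩ (hν (ν b))

theorem IsNewtonWeight.exists_monomial_mem_lowerPart {V : Finset (σ →₀ ℕ)}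
    (hν : IsNewtonWeight ν V) {N : ℕ}
    (hN : ∀ v ∈ V, monomial (N • v) 1 ∈ lowerPart ν h N) :
    ∃ C : ℝ, ∀ m, C < ν m → monomial m 1 ∈ lowerPart ν h (ν m) := by
  obtain ⟨C, hC⟩ := hν.exists_add_nsmul N
  refine ⟨C, fun m hm => ?_⟩
  obtain ⟨v, hv, m', rfl, hm'⟩ := hC m hm
  refine lowerPart_mono hm' (weightLE_mul_lowerPart_le hν.add_le _ _ ?_)
  rw [← mul_one (1 : R), ← monomial_mul]
  exact Submodule.mul_mem_mul (monomial_mem_weightLE le_rfl 1) (hN v hv)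

/-- The filtration of a polynomial ring by total degree, indexed by `ℝ`. -/
noncomputable abbrev degreeLE (τ R : Type*) [CommRing R] (β : ℝ) : Submodule R (MvPolynomial τ R) :=
  weightLE R (fun k : τ →₀ ℕ => (k.degree : ℝ)) β

theorem map_degreeLE_mul_le (α β : ℝ) :
    (degreeLE τ R α).map (aeval h).toLinearMap * (degreeLE τ R β).map (aeval h).toLinearMap ≤
      (degreeLE τ R (α + β)).map (aeval h).toLinearMap := by
  rw [← Submodule.map_mul]
  exact Submodule.map_mono (weightLE_mul_le (fun a b => by simp) α β)

theorem span_range_le_map_degreeLE_one :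
    Submodule.span R (Set.range h) ≤ (degreeLE τ R 1).map (aeval h).toLinearMap := by
  refine Submodule.span_le.2 (Set.range_subset_iff.2 fun i => ?_)
  exact ⟨X i, monomial_mem_weightLE (by simp) 1, aeval_X h i⟩

theorem exists_weightLE_le_map_degreeLE_mul (hfin : ∀ β, {m | ν m ≤ β}.Finite)
    (hnonneg : ∀ m, 0 ≤ ν m)
    (hlow : ∃ C : ℝ, ∀ m, C < ν m → monomial m 1 ∈ lowerPart ν h (ν m)) :
    ∃ C, ∀ β, weightLE R ν β ≤ (degreeLE τ R β).map (aeval h).toLinearMap * weightLE R ν C := by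
  obtain ⟨C, hC⟩ := hlow
  refine ⟨C, fun β => weightLE_le_iff.2 fun m => ?_⟩
  set G : ℝ → Submodule R (MvPolynomial σ R) := fun β =>
    (degreeLE τ R β).map (aeval h).toLinearMap * weightLE R ν C
  have hG : Monotone G := fun _ _ h => mul_le_mul_left (Submodule.map_mono (weightLE_mono h)) _
  suffices H : ∀ m, monomial m 1 ∈ G (ν m) from fun hm => hG hm (H m)
  clear m
  intro m
  induction m using (wellFounded_of_finite_setOf_le hfin).induction with | _ m ih
  rcases le_or_gt (ν m) C with hm | hm
  · rw [← one_mul (monomial m 1)]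
    exact Submodule.mul_mem_mul ⟨1, monomial_mem_weightLE (by simpa using hnonneg m) 1, by simp⟩
      (monomial_mem_weightLE hm 1)
  · refine sup_le (weightLT_le_iff.2 fun k hk => hG hk.le (ih k hk)) ?_ (hC m hm)
    calc filteredSpan ν h Set.univ (ν m - 1)
        ≤ (degreeLE τ R 1).map (aeval h).toLinearMap * G (ν m - 1) := by
          rw [filteredSpan, Set.image_univ]
          exact mul_le_mul' span_range_le_map_degreeLE_one
            (weightLE_le_iff.2 fun k hk => hG hk (ih k (by linarith)))
      _ ≤ G (1 + (ν m - 1)) := by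
          rw [← mul_assoc]
          exact mul_le_mul_left (map_degreeLE_mul_le 1 (ν m - 1)) _
      _ = G (ν m) := by rw [add_sub_cancel]

end Generation

/-! ### Freeness over the subalgebra of a system of parameters -/

section FiniteMorphism

variable {σ τ : Type*}

theorem finite_aeval {R : Type*} [CommRing R] {ν : (σ →₀ ℕ) → ℝ} {h : τ → MvPolynomial σ R}
    (hfin : ∀ β, {m | ν m ≤ β}.Finite)
    (hgen : ∃ C, ∀ β,
      weightLE R ν β ≤ (degreeLE τ R β).map (aeval h).toLinearMap * weightLE R ν C) :
    (aeval h : MvPolynomial τ R →ₐ[R] MvPolynomial σ R).Finite := by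
  obtain ⟨C, hC⟩ := hgen
  let _ := (aeval h : MvPolynomial τ R →ₐ[R] MvPolynomial σ R).toRingHom.toAlgebra
  have : IsScalarTower R (MvPolynomial τ R) (MvPolynomial σ R) :=
    .of_algebraMap_eq fun r => ((aeval h).commutes r).symm
  let S := Submodule.span (MvPolynomial τ R) ((monomial · (1 : R)) '' {m | ν m ≤ C})
  have hS : S.FG := Submodule.fg_span ((hfin C).image _)
  have hC' : weightLE R ν C ≤ S.restrictScalars R := weightLE_le_iff.2 fun m hm =>
    Submodule.subset_span (Set.mem_image_of_mem _ hm)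
  refine ⟨(eq_top_iff.2 fun p _ => ?_ : S = ⊤) ▸ hS⟩
  obtain ⟨β, hβ⟩ := (eventually_mem_weightLE (ν := ν) p).exists
  refine (Submodule.mul_le.2 ?_ : _ ≤ S.restrictScalars R) (hC β hβ)
  rintro _ ⟨q, -, rfl⟩ b hb
  exact S.smul_mem q (hC' hb)

theorem algebraicIndependent_of_finite {K : Type*} [Field K] [Finite σ] [Finite τ]
    {h : τ → MvPolynomial σ K} (hcard : Nat.card τ ≤ Nat.card σ)
    (hh : (aeval h : MvPolynomial τ K →ₐ[K] MvPolynomial σ K).Finite) :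
    AlgebraicIndependent K h := by
  have hval : (Algebra.adjoin K (Set.range h)).val.Finite := by
    rw [Algebra.adjoin_range_eq_range_aeval]
    exact AlgHom.Finite.of_comp_finite (f := (aeval h).rangeRestrict)
      (by rwa [AlgHom.val_comp_rangeRestrict])
  have : Module.Finite (Algebra.adjoin K (Set.range h)) (MvPolynomial σ K) := hval
  have : Algebra.IsAlgebraic (Algebra.adjoin K (Set.range h)) (MvPolynomial σ K) :=
    Algebra.IsIntegral.isAlgebraic
  refine (Algebra.IsAlgebraic.isTranscendenceBasis_of_lift_le_trdeg_of_finite K h ?_).1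
  rw [MvPolynomial.trdeg_of_isDomain, ← Nat.cast_card (α := τ), ← Nat.cast_card (α := σ)]
  simpa using hcard

theorem exists_linearIndepOn_smul_mem_span {A M ι : Type*} [CommRing A] [IsDomain A]
    [AddCommGroup M] [Module A M] (b : ι → M) (T : Finset ι) :
    ∃ S : Finset ι, LinearIndepOn A b S ∧
      ∃ c : A, c ≠ 0 ∧ ∀ i ∈ T, c • b i ∈ Submodule.span A (b '' S) := by
  classical
  obtain ⟨S, hS, hmax⟩ := exists_maximal_linearIndepOn A fun i : T => b i
  have himage : b '' (S.toFinset.map (.subtype _) : Finset ι) = (fun i : T => b i) '' S := by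
    simp [Set.image_image]
  have hmem (i : T) : ∃ a : A, a ≠ 0 ∧ a • b i ∈ Submodule.span A ((fun i : T => b i) '' S) := by
    by_cases hi : i ∈ S
    · exact ⟨1, one_ne_zero,
        (one_smul A (b i)).symm ▸ Submodule.subset_span (Set.mem_image_of_mem _ hi)⟩
    · exact hmax i hi
  choose a ha hab using hmem
  refine ⟨S.toFinset.map (.subtype _), ?_, ∏ i, a i, Finset.prod_ne_zero_iff.2 fun i _ => ha i,
    fun i hi => ?_⟩
  · simpa using LinearIndepOn.image_of_comp (Subtype.val : T → ι) b hS
  · rw [himage, ← Finset.prod_erase_mul _ _ (Finset.mem_univ ⟨i, hi⟩), mul_smul]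
    exact Submodule.smul_mem _ _ (hab ⟨i, hi⟩)

variable {R : Type*} [CommRing R] {ν : (σ →₀ ℕ) → ℝ} {h : τ → MvPolynomial σ R}

theorem exists_span_singleton_mul_weightLE_le {C : ℝ} (hfin : {m | ν m ≤ C}.Finite)
    (hC : ∀ β, weightLE R ν β ≤ (degreeLE τ R β).map (aeval h).toLinearMap * weightLE R ν C)
    {c : MvPolynomial τ R} {S : Finset (σ →₀ ℕ)}
    (hc : ∀ m, ν m ≤ C → ∃ p : (σ →₀ ℕ) → MvPolynomial τ R,
      ∑ k ∈ S, monomial k 1 * aeval h (p k) = aeval h c * monomial m 1) :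
    ∃ D, ∀ β, Submodule.span R {aeval h c} * weightLE R ν β ≤
      Submodule.span R ((monomial · (1 : R)) '' S) *
        (degreeLE τ R (β + D)).map (aeval h).toLinearMap := by
  choose! p hp using hc
  obtain ⟨D, hD⟩ := ((Filter.eventually_all_finite hfin).2 fun m _ =>
    (Filter.eventually_all_finset S).2 fun k _ =>
      eventually_mem_weightLE (ν := fun k : τ →₀ ℕ => (k.degree : ℝ)) (p m k)).exists
  let M := Submodule.span R ((monomial · (1 : R)) '' (S : Set (σ →₀ ℕ)))
  let Q (β : ℝ) := (degreeLE τ R β).map (aeval h).toLinearMap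
  have hCD : Submodule.span R {aeval h c} * weightLE R ν C ≤ M * Q D := by
    rw [weightLE, restrictSupport_eq_span, Submodule.span_mul_span, Submodule.span_le]
    rintro _ ⟨_, rfl, _, ⟨m, hm, rfl⟩, rfl⟩
    refine (congrArg (· ∈ M * Q D) (hp m hm)).mp (Submodule.sum_mem _ fun k hk => ?_)
    exact Submodule.mul_mem_mul (Submodule.subset_span (Set.mem_image_of_mem _ hk))
      (Submodule.mem_map_of_mem (hD m hm k hk))
  refine ⟨D, fun β => ?_⟩
  calc Submodule.span R {aeval h c} * weightLE R ν β
      ≤ Submodule.span R {aeval h c} * (Q β * weightLE R ν C) := mul_le_mul_right (hC β) _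
    _ = Q β * (Submodule.span R {aeval h c} * weightLE R ν C) := mul_left_comm _ _ _
    _ ≤ Q β * (M * Q D) := mul_le_mul_right hCD _
    _ = M * (Q β * Q D) := mul_left_comm _ _ _
    _ ≤ M * Q (β + D) := mul_le_mul_right (map_degreeLE_mul_le β D) _

theorem exists_free_reduction [IsDomain R] (hfin : ∀ β, {m | ν m ≤ β}.Finite)
    (hgen : ∃ C, ∀ β,
      weightLE R ν β ≤ (degreeLE τ R β).map (aeval h).toLinearMap * weightLE R ν C) :
    ∃ (S : Finset (σ →₀ ℕ)) (c : MvPolynomial τ R), c ≠ 0 ∧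
      (∀ p : (σ →₀ ℕ) → MvPolynomial τ R,
        ∑ k ∈ S, monomial k 1 * aeval h (p k) = 0 → ∀ k ∈ S, p k = 0) ∧
      ∃ D, ∀ β, ∀ x ∈ weightLE R ν β, ∃ p : (σ →₀ ℕ) → MvPolynomial τ R,
        (∀ k, p k ∈ degreeLE τ R (β + D)) ∧
          ∑ k ∈ S, monomial k 1 * aeval h (p k) = aeval h c * x := by
  obtain ⟨C, hC⟩ := hgen
  let _ := (aeval h : MvPolynomial τ R →ₐ[R] MvPolynomial σ R).toRingHom.toAlgebra
  have smul_eq (p : MvPolynomial τ R) (k : σ →₀ ℕ) :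
      p • monomial k (1 : R) = monomial k 1 * aeval h p := mul_comm _ _
  obtain ⟨S, hS, c, hc0, hc⟩ := exists_linearIndepOn_smul_mem_span (A := MvPolynomial τ R)
    (fun k => monomial k (1 : R)) (hfin C).toFinset
  obtain ⟨D, hD⟩ := exists_span_singleton_mul_weightLE_le (hfin C) hC (c := c) (S := S)
    fun m hm => by
      simpa only [smul_eq, mul_comm (monomial m (1 : R))] using
        (Submodule.mem_span_image_finset_iff_exists_fun' _).1 (hc m ((hfin C).mem_toFinset.2 hm))
  refine ⟨S, c, hc0, fun p hp => linearIndepOn_finset_iff.1 hS p ?_, D, fun β x hx => ?_⟩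
  · simpa only [smul_eq] using hp
  · obtain ⟨s, hs, hsum⟩ := mem_span_image_mul_iff_exists_sum.1
      (hD β (Submodule.mul_mem_mul (Submodule.mem_span_singleton_self _) hx))
    choose p hp hps using hs
    exact ⟨p, hp, by simpa only [← hps, AlgHom.toLinearMap_apply] using hsum⟩

theorem mem_filteredSpan_X_pow_of_monomial_mul_mem {J : Finset τ} {q : ℕ} {d : ℝ}
    {p : MvPolynomial τ R} (hp : p ∈ degreeLE τ R d) {e : τ →₀ ℕ} (he : ∀ i ∈ J, e i = 0)
    (hmem : monomial e 1 * p ∈ Ideal.span ((fun i => (X i : MvPolynomial τ R) ^ q) '' J)) :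
    p ∈ filteredSpan (fun k => (k.degree : ℝ)) (fun i => (X i : MvPolynomial τ R) ^ q) J
      (d - q) := by
  classical
  have himage : (fun i => (X i : MvPolynomial τ R) ^ q) '' J =
      (monomial · 1) '' ((fun i => Finsupp.single i q) '' (J : Set τ)) := by
    simp only [Set.image_image, X_pow_eq_monomial]
  rw [himage, mem_ideal_span_monomial_image] at hmem
  rw [p.as_sum]
  refine Submodule.sum_mem _ fun m hm => ?_
  obtain ⟨_, ⟨i, hi, rfl⟩, hle⟩ := hmem (e + m) (by
    rwa [mem_support_iff, coeff_monomial_mul, one_mul, ← mem_support_iff])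
  obtain ⟨k, rfl⟩ : ∃ k, m = Finsupp.single i q + k :=
    exists_add_of_le (Finsupp.single_le_iff.2 (by
      simpa [he i hi] using Finsupp.single_le_iff.1 hle))
  rw [← one_mul (coeff _ p), ← monomial_mul, ← X_pow_eq_monomial]
  refine Submodule.mul_mem_mul (Submodule.subset_span ⟨i, hi, rfl⟩) (monomial_mem_weightLE ?_ _)
  have hdeg : ((Finsupp.single i q + k).degree : ℝ) ≤ d := hp hm
  rw [map_add, Finsupp.degree_single, Nat.cast_add] at hdeg
  linarith

theorem map_degreeLE_le_weightLE (hν : ∀ a b, ν (a + b) ≤ ν a + ν b) (h0 : ν 0 ≤ 0)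
    (h1 : ∀ i, h i ∈ weightLE R ν 1) (β : ℝ) :
    (degreeLE τ R β).map (aeval h).toLinearMap ≤ weightLE R ν β := by
  refine Submodule.map_le_iff_le_comap.2 (weightLE_le_iff.2 fun k hk => weightLE_mono hk ?_)
  suffices ∀ k : τ →₀ ℕ, aeval h (monomial k (1 : R)) ∈ weightLE R ν k.degree from this k
  intro k
  induction k using Finsupp.induction_linear with
  | zero => simpa using monomial_mem_weightLE h0 (1 : R)
  | add k l hk hl =>
    rw [← one_mul (1 : R), ← monomial_mul, map_mul, map_add, Nat.cast_add]
    exact weightLE_mul_le hν _ _ (Submodule.mul_mem_mul hk hl)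
  | single i n =>
    rw [← X_pow_eq_monomial, map_pow, aeval_X, Finsupp.degree_single]
    simpa using pow_mem_weightLE hν h0 (h1 i) n

theorem aeval_mem_filteredSpan_pow (hν : ∀ a b, ν (a + b) ≤ ν a + ν b) (h0 : ν 0 ≤ 0)
    (h1 : ∀ i, h i ∈ weightLE R ν 1) {J : Set τ} {q : ℕ} {d : ℝ} {p : MvPolynomial τ R}
    (hp : p ∈ filteredSpan (fun k => (k.degree : ℝ)) (fun i => (X i : MvPolynomial τ R) ^ q) J d) :
    aeval h p ∈ filteredSpan ν (fun i => h i ^ q) J d := by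
  have hmap := Submodule.mem_map_of_mem (f := (aeval h).toLinearMap) hp
  rw [filteredSpan, Submodule.map_mul, Submodule.map_span, Set.image_image] at hmap
  simp only [AlgHom.toLinearMap_apply, map_pow, aeval_X] at hmap
  exact mul_le_mul_right (map_degreeLE_le_weightLE hν h0 h1 d) _ hmap

theorem coord_mul_mem_span_X_pow {S : Finset (σ →₀ ℕ)} {c : MvPolynomial τ R}
    (hind : ∀ p : (σ →₀ ℕ) → MvPolynomial τ R,
      ∑ k ∈ S, monomial k 1 * aeval h (p k) = 0 → ∀ k ∈ S, p k = 0)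
    (hred : ∀ x, ∃ p : (σ →₀ ℕ) → MvPolynomial τ R,
      ∑ k ∈ S, monomial k 1 * aeval h (p k) = aeval h c * x)
    {J : Finset τ} {q : ℕ} {w : MvPolynomial τ R} {x : MvPolynomial σ R}
    {p : (σ →₀ ℕ) → MvPolynomial τ R}
    (hp : ∑ k ∈ S, monomial k 1 * aeval h (p k) = aeval h c * x)
    (hx : aeval h w * x ∈ Ideal.span ((fun i => h i ^ q) '' J)) {k : σ →₀ ℕ} (hk : k ∈ S) :
    w * p k ∈ Ideal.span ((fun i => (X i : MvPolynomial τ R) ^ q) '' J) := by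
  obtain ⟨s, hs⟩ := (Submodule.mem_span_image_finset_iff_exists_fun' _).1 hx
  choose p' hp' using fun i => hred (s i)
  have hcoord : w * p k - ∑ i ∈ J, p' i k * X i ^ q = 0 := by
    refine hind (fun k => w * p k - ∑ i ∈ J, p' i k * X i ^ q) ?_ k hk
    calc ∑ k ∈ S, monomial k 1 * aeval h (w * p k - ∑ i ∈ J, p' i k * X i ^ q)
        = aeval h w * ∑ k ∈ S, monomial k 1 * aeval h (p k) -
            ∑ i ∈ J, (∑ k ∈ S, monomial k 1 * aeval h (p' i k)) * h i ^ q := by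
          simp only [map_sub, map_mul, map_sum, map_pow, aeval_X, mul_sub,
            Finset.sum_sub_distrib, Finset.mul_sum, Finset.sum_mul]
          rw [Finset.sum_comm (s := S)]
          simp only [mul_left_comm (aeval h w), mul_assoc]
      _ = aeval h c * (aeval h w * x - ∑ i ∈ J, s i • h i ^ q) := by
          simp only [hp, hp', mul_sub, Finset.mul_sum, smul_eq_mul, mul_assoc,
            mul_left_comm (aeval h w)]
      _ = 0 := by rw [hs, sub_self, mul_zero]
  rw [sub_eq_zero.1 hcoord]
  exact Ideal.sum_mem _ fun i hi =>
    Ideal.mul_mem_left _ _ (Ideal.subset_span (Set.mem_image_of_mem _ hi))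

theorem exists_aeval_mul_mem_filteredSpan_pow [Fintype τ] [DecidableEq τ] [IsDomain R]
    (hν : ∀ a b, ν (a + b) ≤ ν a + ν b) (h0 : ν 0 ≤ 0) (h1 : ∀ i, h i ∈ weightLE R ν 1)
    (hfin : ∀ β, {m | ν m ≤ β}.Finite)
    (hgen : ∃ C, ∀ β,
      weightLE R ν β ≤ (degreeLE τ R β).map (aeval h).toLinearMap * weightLE R ν C) :
    ∃ c : MvPolynomial τ R, c ≠ 0 ∧ ∃ D : ℝ, ∀ (q : ℕ) (J : Finset τ) (β : ℝ),
      ∀ x ∈ weightLE R ν β, (∏ i ∈ Jᶜ, h i ^ q) * x ∈ Ideal.span ((fun i => h i ^ q) '' J) →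
        aeval h c * x ∈ filteredSpan ν (fun i => h i ^ q) J (β - q + D) := by
  obtain ⟨S, c, hc, hind, D, hD⟩ := exists_free_reduction hfin hgen
  obtain ⟨E, hE⟩ : ∃ E, ∀ k ∈ S, ν k ≤ E :=
    ((Filter.eventually_all_finset S).2 fun k _ => eventually_ge_atTop (ν k)).exists
  have hred (y : MvPolynomial σ R) : ∃ p : (σ →₀ ℕ) → MvPolynomial τ R,
      ∑ k ∈ S, monomial k 1 * aeval h (p k) = aeval h c * y := by
    obtain ⟨γ, hγ⟩ := (eventually_mem_weightLE (ν := ν) y).exists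
    obtain ⟨p, -, hp⟩ := hD γ y hγ
    exact ⟨p, hp⟩
  refine ⟨c, hc, E + D, fun q J β x hx hmem => ?_⟩
  obtain ⟨p, hp, hpx⟩ := hD β x hx
  rw [← hpx, show β - q + (E + D) = E + (β + D - q) by ring]
  refine Submodule.sum_mem _ fun k hk => ?_
  have hpk : p k ∈ filteredSpan (fun k => (k.degree : ℝ)) (fun i => (X i : MvPolynomial τ R) ^ q) J
      (β + D - q) := by
    refine mem_filteredSpan_X_pow_of_monomial_mul_mem (hp k)
      (e := ∑ i ∈ Jᶜ, Finsupp.single i q) (fun i hi => ?_) ?_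
    · simp [Finsupp.finsetSum_apply, Finsupp.single_apply, hi]
    · rw [monomial_sum_one]
      simp only [← X_pow_eq_monomial]
      exact coord_mul_mem_span_X_pow hind hred hpx (by simpa [map_prod, map_pow] using hmem) hk
  have hmul := Submodule.mul_mem_mul (monomial_mem_weightLE (hE k hk) (1 : R))
    (aeval_mem_filteredSpan_pow hν h0 h1 hpk)
  exact weightLE_mul_filteredSpan_le (h := fun i => h i ^ q) hν J E (β + D - q) hmul

end FiniteMorphism

/-! ### Regularity over finite fields -/

section FiniteField

variable {σ τ : Type*}

/-- The condition that `h` is a regular sequence in every order, strictly with respect to the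
filtration by `ν`: whatever is killed by `∏_{i ∉ J} hᵢ` modulo `(hᵢ)_{i ∈ J}` lies in
`∑_{i ∈ J} hᵢ 𝒩_{α - 1}` if it lies in `𝒩_α`. -/
def FilteredRegular {R : Type*} [CommRing R] [Fintype τ] [DecidableEq τ] (ν : (σ →₀ ℕ) → ℝ)
    (h : τ → MvPolynomial σ R) : Prop :=
  ∀ (J : Finset τ) (α : ℝ), ∀ r ∈ weightLE R ν α,
    (∏ i ∈ Jᶜ, h i) * r ∈ Ideal.span (h '' J) → r ∈ filteredSpan ν h J (α - 1)

theorem IsNewtonWeight.eventually_forall_le [Finite σ] {ν : (σ →₀ ℕ) → ℝ} {V : Finset (σ →₀ ℕ)}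
    (hν : IsNewtonWeight ν V) (a : σ →₀ ℕ) (β C : ℝ) :
    ∀ᶠ q : ℕ in atTop, ∀ m, ν (q • m + a) ≤ q * β + C → ν m ≤ β := by
  obtain ⟨L, hL, hcoord⟩ := hν.exists_apply_le
  have hm (m : σ →₀ ℕ) : ∀ᶠ q : ℕ in atTop, ν (q • m + a) ≤ q * β + C → ν m ≤ β := by
    by_cases h : ν m ≤ β
    · exact Eventually.of_forall fun _ _ => h
    · exact (not_frequently.1 (mt (hν.le_of_frequently m a β C) h)).mono
        fun q hq hq' => absurd hq' hq
  filter_upwards [(eventually_all_finite (finite_setOf_forall_apply_le (L * (|β| + |C|)))).2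
    fun m _ => hm m, eventually_ge_atTop 1] with q hq hq1 m hle
  refine hq m (fun i => ?_) hle
  have hq1 : (1 : ℝ) ≤ q := by exact_mod_cast hq1
  refine le_of_mul_le_mul_left ?_ (zero_lt_one.trans_le hq1)
  calc (q : ℝ) * m i ≤ (q • m + a) i := by simp
    _ ≤ L * (q * β + C) := (hcoord _ i).trans (mul_le_mul_of_nonneg_left hle hL)
    _ ≤ L * (q * |β| + q * |C|) := by
      gcongr
      · exact le_abs_self β
      · exact (le_abs_self C).trans (le_mul_of_one_le_left (abs_nonneg C) hq1)
    _ = q * (L * (|β| + |C|)) := by ring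

section Cartier

variable {R : Type*} [CommRing R] (q : ℕ) [NeZero q] (a : σ →₀ ℕ)

theorem nsmul_add_injective : Function.Injective fun m : σ →₀ ℕ => q • m + a := fun _ _ hm =>
  nsmul_right_injective (NeZero.ne q) (add_right_cancel hm)

/-- A Cartier operator: the linear map with `u^(q m + a) ↦ u^m`, which kills all other monomials.
It is linear over the ring of polynomials in the `uᵢ^q`. -/
noncomputable def cartier : MvPolynomial σ R →ₗ[R] MvPolynomial σ R :=
  (AddMonoidAlgebra.coeffLinearEquiv R).symm.toLinearMap ∘ₗ
    Finsupp.lcomapDomain (fun m : σ →₀ ℕ => q • m + a) (nsmul_add_injective q a) ∘ₗ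
      (AddMonoidAlgebra.coeffLinearEquiv R).toLinearMap

theorem coeff_cartier (m : σ →₀ ℕ) (p : MvPolynomial σ R) :
    coeff m (cartier q a p) = coeff (q • m + a) p := rfl

variable {q a}

theorem cartier_mul_X_pow (ha : ∀ i, a i < q) (s : MvPolynomial σ R) (i : σ) :
    cartier q a (s * X i ^ q) = cartier q a s * X i := by
  classical
  ext m
  have hiff : Finsupp.single i q ≤ q • m + a ↔ i ∈ m.support := by
    rw [Finsupp.single_le_iff, Finsupp.mem_support_iff]
    refine ⟨fun h h0 => (ha i).not_ge (by simpa [h0] using h), fun h => ?_⟩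
    exact (Nat.le_mul_of_pos_right q (Nat.pos_of_ne_zero h)).trans (Nat.le_add_right _ _)
  rw [coeff_cartier, X_pow_eq_monomial, coeff_mul_monomial', coeff_mul_X', mul_one]
  simp only [hiff]
  refine ite_congr rfl (fun hi => ?_) fun _ => rfl
  obtain ⟨m, rfl⟩ := exists_add_of_le (Finsupp.single_le_iff.2
    (Nat.one_le_iff_ne_zero.2 (Finsupp.mem_support_iff.1 hi)))
  rw [add_tsub_cancel_left, coeff_cartier, smul_add, Finsupp.smul_single, smul_eq_mul, mul_one,
    add_assoc, add_tsub_cancel_left]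

theorem cartier_mul_expand (ha : ∀ i, a i < q) (s g : MvPolynomial σ R) :
    cartier q a (s * expand q g) = cartier q a s * g := by
  induction g using MvPolynomial.induction_on generalizing s with
  | C r => rw [expand_C, mul_comm, ← smul_eq_C_mul, map_smul, smul_eq_C_mul, mul_comm]
  | add g g' hg hg' => rw [map_add, mul_add, map_add, hg, hg', mul_add]
  | mul_X g i hg =>
    rw [map_mul (expand q), expand_X, mul_left_comm, mul_comm (expand q g), hg,
      cartier_mul_X_pow ha, mul_assoc, mul_comm (X i)]

theorem cartier_eq_C {g : MvPolynomial σ R} (hg : ∀ k ∈ g.support, ∀ i, k i < q) :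
    cartier q a g = C (coeff a g) := by
  classical
  ext m
  rw [coeff_cartier, coeff_C]
  split_ifs with hm
  · rw [← hm, smul_zero, zero_add]
  · obtain ⟨i, hi⟩ := Finsupp.ne_iff.1 (Ne.symm hm)
    refine notMem_support_iff.1 fun hmem => (hg _ hmem i).not_ge ?_
    exact (Nat.le_mul_of_pos_right q (Nat.pos_of_ne_zero hi)).trans (Nat.le_add_right _ _)

theorem cartier_mem_filteredSpan {ν : (σ →₀ ℕ) → ℝ} {h : τ → MvPolynomial σ R} {J : Finset τ}
    {γ δ : ℝ} (ha : ∀ i, a i < q) (hγ : ∀ m, ν (q • m + a) ≤ γ → ν m ≤ δ)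
    {x : MvPolynomial σ R} (hx : x ∈ filteredSpan ν (fun i => expand q (h i)) J γ) :
    cartier q a x ∈ filteredSpan ν h J δ := by
  obtain ⟨s, hs, rfl⟩ := mem_span_image_mul_iff_exists_sum.1 hx
  refine mem_span_image_mul_iff_exists_sum.2 ⟨fun i => cartier q a (s i), fun i => ?_, ?_⟩
  · refine mem_weightLE_iff.2 fun m hm => hγ m (hs i ?_)
    exact mem_support_iff.2 (coeff_cartier q a m (s i) ▸ mem_support_iff.1 hm)
  · simp only [map_sum, mul_comm (expand q _), cartier_mul_expand ha, mul_comm (h _)]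

end Cartier

theorem expand_card_pow {K : Type*} [Field K] [Finite K] (e : ℕ) (g : MvPolynomial σ K) :
    expand (Nat.card K ^ e) g = g ^ Nat.card K ^ e := by
  cases nonempty_fintype K
  obtain ⟨p, n, _, hcard⟩ := FiniteField.card' K
  have := Fact.mk hcard.1
  induction g using MvPolynomial.induction_on with
  | C r => rw [expand_C, ← map_pow, Nat.card_eq_fintype_card, FiniteField.pow_card_pow]
  | add g g' hg hg' =>
    rw [map_add, hg, hg', Nat.card_eq_fintype_card, hcard.2, ← pow_mul, add_pow_char_pow]
  | mul_X g i hg => rw [map_mul, hg, expand_X, mul_pow]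

theorem filteredRegular_of_finite {K : Type*} [Field K] [Finite K] [Finite σ] [Fintype τ]
    [DecidableEq τ] {ν : (σ →₀ ℕ) → ℝ} {V : Finset (σ →₀ ℕ)} (hν : IsNewtonWeight ν V)
    (hcard : Nat.card τ ≤ Nat.card σ) {h : τ → MvPolynomial σ K}
    (h1 : ∀ i, h i ∈ weightLE K ν 1) {N : ℕ}
    (hN : ∀ v ∈ V, monomial (N • v) 1 ∈ lowerPart ν h N) : FilteredRegular ν h := by
  intro J α r hr hmem
  have hfin := hν.finite_setOf_le
  have hgen := exists_weightLE_le_map_degreeLE_mul hfin hν.nonneg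
    (hν.exists_monomial_mem_lowerPart hN)
  obtain ⟨c, hc, D, hD⟩ :=
    exists_aeval_mul_mem_filteredSpan_pow hν.add_le hν.map_zero_le h1 hfin hgen
  have hc' : aeval h c ≠ 0 := (map_ne_zero_iff _
    (algebraicIndependent_of_finite hcard (finite_aeval hfin hgen))).2 hc
  obtain ⟨a, ha⟩ := support_nonempty.2 hc'
  have hexp : ∀ᶠ q : ℕ in atTop, ∀ k ∈ (aeval h c).support, ∀ i, k i < q :=
    (eventually_all_finset _).2 fun k _ => eventually_all.2 fun i => eventually_gt_atTop (k i)
  have htendsto := tendsto_pow_atTop_atTop_of_one_lt (Finite.one_lt_card (α := K))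
  obtain ⟨e, hexp, hle⟩ :=
    (htendsto.eventually (hexp.and (hν.eventually_forall_le a (α - 1) D))).exists
  set q := Nat.card K ^ e with hq
  have : NeZero q := ⟨pow_ne_zero e Nat.card_pos.ne'⟩
  have hrq : aeval h c * expand q r ∈
      filteredSpan ν (fun i => expand q (h i)) J (q * (α - 1) + D) := by
    simp only [hq, expand_card_pow]
    rw [← hq, mul_sub_one]
    refine hD q J _ _ ?_ ?_
    · exact pow_mem_weightLE hν.add_le hν.map_zero_le hr q
    · simpa [Ideal.map_span, Set.image_image, expand_card_pow, hq, mul_pow, Finset.prod_pow] using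
        Ideal.mem_map_of_mem (expand q) hmem
  have hΦ := cartier_mem_filteredSpan (hexp a ha) hle hrq
  rw [cartier_mul_expand (hexp a ha), cartier_eq_C hexp, ← smul_eq_C_mul] at hΦ
  exact (Submodule.smul_mem_iff _ (mem_support_iff.1 ha)).1 hΦ

end FiniteField

/-! ### Descent to finite fields -/

section Descent

theorem isJacobsonRing_int : IsJacobsonRing ℤ := by
  refine isJacobsonRing_iff_prime_eq.2 fun P hP => ?_
  rcases eq_or_ne P ⊥ with rfl | hP0
  · refine eq_bot_iff.2 fun x hx => Ideal.mem_bot.2 ?_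
    rcases Int.isUnit_iff.1 (Ideal.mem_jacobson_bot.1 hx 3) with h | h <;> lia
  · have := hP.isMaximal hP0
    exact Ideal.jacobson_eq_self_of_isMaximal

theorem finite_of_finiteType_int (K : Type*) [Field K] [hK : Algebra ℤ K] [Algebra.FiniteType ℤ K] :
    Finite K := by
  obtain rfl : hK = Ring.toIntAlgebra K := Subsingleton.elim _ _
  have := isJacobsonRing_int
  have := finite_of_finite_type_of_isJacobsonRing ℤ K
  obtain ⟨p, hp⟩ := CharP.exists K
  have hp0 : p ≠ 0 := by
    rintro rfl
    have : CharZero K := CharP.charP_to_charZero K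
    exact Int.not_isField (isField_of_isIntegral_of_isField
      (algebraMap ℤ K).injective_int (Field.toIsField K))
  have : NeZero p := ⟨hp0⟩
  let _ := ZMod.algebra K p
  have : Module.Finite (ZMod p) K := .of_restrictScalars_finite ℤ (ZMod p) K
  exact Module.finite_of_finite (ZMod p)

universe u

variable {F : Type u} [Field F]

/-- The subring generated by finitely many elements of `F`. Letting `C` tend to `atTop` in
`Finset F` makes these subrings exhaust `F`. -/
abbrev coeffSubring (C : Finset F) : Subring F := (Algebra.adjoin ℤ (C : Set F)).toSubring

theorem exists_finite_field_ringHom (C : Finset F) :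
    ∃ (K : Type u) (_ : Field K), Finite K ∧ Nonempty (coeffSubring C →+* K) := by
  have hft : Algebra.FiniteType ℤ (Algebra.adjoin ℤ (C : Set F)) :=
    (Subalgebra.fg_iff_finiteType _).1 ⟨C, rfl⟩
  obtain ⟨m, hm⟩ := Ideal.exists_maximal (Algebra.adjoin ℤ (C : Set F))
  let _ : Field (Algebra.adjoin ℤ (C : Set F) ⧸ m) := Ideal.Quotient.field m
  have : Algebra.FiniteType ℤ (Algebra.adjoin ℤ (C : Set F) ⧸ m) :=
    .of_surjective (Ideal.Quotient.mkₐ ℤ m) (Ideal.Quotient.mkₐ_surjective ℤ m)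
  exact ⟨Algebra.adjoin ℤ (C : Set F) ⧸ m, inferInstance, finite_of_finiteType_int _,
    ⟨Ideal.Quotient.mk m⟩⟩

theorem eventually_mem_coeffSubring (x : F) : ∀ᶠ C : Finset F in atTop, x ∈ coeffSubring C :=
  (eventually_ge_atTop {x}).mono fun _ hC =>
    Algebra.subset_adjoin (Finset.singleton_subset_iff.1 hC)

variable {σ τ : Type*}

theorem eventually_exists_map_subtype_eq (g : MvPolynomial σ F) :
    ∀ᶠ C : Finset F in atTop, ∃ g' : MvPolynomial σ (coeffSubring C),
      map (coeffSubring C).subtype g' = g := by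
  filter_upwards [(eventually_all_finset g.support).2 fun m _ =>
    eventually_mem_coeffSubring (coeff m g)] with C hC
  refine mem_range_map_iff_coeffs_subset.2 fun x hx => ?_
  obtain ⟨m, hm, rfl⟩ := mem_coeffs_iff.1 hx
  exact ⟨⟨coeff m g, hC m hm⟩, rfl⟩

theorem eventually_exists_forall_map_subtype_eq [Finite τ] (g : τ → MvPolynomial σ F) :
    ∀ᶠ C : Finset F in atTop, ∃ g' : τ → MvPolynomial σ (coeffSubring C),
      ∀ i, map (coeffSubring C).subtype (g' i) = g i :=
  (eventually_all.2 fun i => eventually_exists_map_subtype_eq (g i)).mono fun _ hC =>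
    ⟨fun i => (hC i).choose, fun i => (hC i).choose_spec⟩

theorem map_subtype_injective (D : Subring F) :
    Function.Injective (map (σ := σ) D.subtype) :=
  map_injective _ D.subtype_injective

theorem map_mem_restrictSupport {D : Subring F} {K : Type*} [Field K] (φ : D →+* K)
    {S : Set (σ →₀ ℕ)} {g : MvPolynomial σ D} (hg : map D.subtype g ∈ restrictSupport F S) :
    map φ g ∈ restrictSupport K S := fun m hm => by
  refine hg (Finset.mem_coe.2 (?_ : m ∈ (map D.subtype g).support))
  rw [support_map_of_injective g D.subtype_injective]
  exact support_map_subset φ g hm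

variable {ν : (σ →₀ ℕ) → ℝ} {h : τ → MvPolynomial σ F}

theorem eventually_map_mem_lowerPart [Finite τ] {x : MvPolynomial σ F} {e : ℝ}
    (hx : x ∈ lowerPart ν h e) :
    ∀ᶠ C : Finset F in atTop, ∀ (h' : τ → MvPolynomial σ (coeffSubring C))
        (x' : MvPolynomial σ (coeffSubring C)),
      (∀ i, map (coeffSubring C).subtype (h' i) = h i) → map (coeffSubring C).subtype x' = x →
      ∀ {K : Type u} [Field K] (φ : coeffSubring C →+* K),
        map φ x' ∈ lowerPart ν (fun i => map φ (h' i)) e := by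
  cases nonempty_fintype τ
  obtain ⟨w, hw, y, hy, rfl⟩ := Submodule.mem_sup.1 hx
  rw [← Finset.coe_univ] at hy
  obtain ⟨s, hs, rfl⟩ := mem_span_image_mul_iff_exists_sum.1 hy
  filter_upwards [eventually_exists_map_subtype_eq w, eventually_exists_forall_map_subtype_eq s]
    with C ⟨w', hw'⟩ ⟨s', hs'⟩ h' x' hh' hx' K _ φ
  obtain rfl : x' = w' + ∑ i, h' i * s' i :=
    map_subtype_injective _ (by simp only [hx', map_add, map_sum, map_mul, hw', hs', hh'])
  rw [map_add, map_sum]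
  refine Submodule.add_mem_sup (map_mem_restrictSupport φ (hw' ▸ hw)) ?_
  rw [← Finset.coe_univ]
  exact mem_span_image_mul_iff_exists_sum.2 ⟨fun i => map φ (s' i),
    fun i => map_mem_restrictSupport φ (hs' i ▸ hs i), by simp only [map_mul]⟩

theorem eventually_map_mem_span [Finite τ] {x : MvPolynomial σ F} {J : Finset τ}
    (hx : x ∈ Ideal.span (h '' J)) :
    ∀ᶠ C : Finset F in atTop, ∀ (h' : τ → MvPolynomial σ (coeffSubring C))
        (x' : MvPolynomial σ (coeffSubring C)),
      (∀ i, map (coeffSubring C).subtype (h' i) = h i) → map (coeffSubring C).subtype x' = x →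
      ∀ {K : Type u} [Field K] (φ : coeffSubring C →+* K),
        map φ x' ∈ Ideal.span ((fun i => map φ (h' i)) '' J) := by
  obtain ⟨s, rfl⟩ := (Submodule.mem_span_image_finset_iff_exists_fun' _).1 hx
  filter_upwards [eventually_exists_forall_map_subtype_eq s] with C ⟨s', hs'⟩ h' x' hh' hx' K _ φ
  obtain rfl : x' = ∑ i ∈ J, s' i * h' i :=
    map_subtype_injective _ (by simp only [hx', map_sum, map_mul, hs', hh', smul_eq_mul])
  rw [map_sum]
  refine sum_mem fun i hi => ?_
  rw [map_mul]
  exact Ideal.mul_mem_left _ _ (Ideal.subset_span ⟨i, hi, rfl⟩)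

theorem constr_basisMonomials_monomial {R : Type*} [CommRing R] (c : (σ →₀ ℕ) → R) (m : σ →₀ ℕ)
    (a : R) : (basisMonomials σ R).constr R c (monomial m a) = a * c m := by
  have hm : monomial m a = a • basisMonomials σ R m := by simp [smul_monomial]
  rw [hm, map_smul, Module.Basis.constr_basis, smul_eq_mul]

theorem constr_basisMonomials_map {R S : Type*} [CommRing R] [CommRing S] (φ : R →+* S)
    (c : (σ →₀ ℕ) → R) (g : MvPolynomial σ R) :
    (basisMonomials σ S).constr S (fun m => φ (c m)) (map φ g) =
      φ ((basisMonomials σ R).constr R c g) := by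
  induction g using MvPolynomial.induction_on' with
  | monomial m a => simp only [map_monomial, constr_basisMonomials_monomial, map_mul]
  | add p q hp hq => simp only [map_add, hp, hq]

theorem constr_basisMonomials_congr {R : Type*} [CommRing R] {c d : (σ →₀ ℕ) → R}
    {g : MvPolynomial σ R} (hcd : ∀ m ∈ g.support, c m = d m) :
    (basisMonomials σ R).constr R c g = (basisMonomials σ R).constr R d g := by
  rw [g.as_sum, map_sum, map_sum]
  refine Finset.sum_congr rfl fun m hm => ?_
  rw [constr_basisMonomials_monomial, constr_basisMonomials_monomial, hcd m hm]

theorem eventually_exists_constr_eq (l : MvPolynomial σ F →ₗ[F] F) {T : Set (MvPolynomial σ F)}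
    (hT : T.Finite) :
    ∀ᶠ C : Finset F in atTop, ∃ c : (σ →₀ ℕ) → coeffSubring C,
      ∀ g : MvPolynomial σ (coeffSubring C), map (coeffSubring C).subtype g ∈ T →
      (coeffSubring C).subtype ((basisMonomials σ (coeffSubring C)).constr (coeffSubring C) c g) =
        l (map (coeffSubring C).subtype g) := by
  classical
  filter_upwards [(eventually_all_finite hT).2 fun g _ => (eventually_all_finset g.support).2
    fun m _ => eventually_mem_coeffSubring (l (monomial m 1))] with C hC
  set D := coeffSubring C
  refine ⟨fun m => if hm : l (monomial m 1) ∈ D then ⟨_, hm⟩ else 0, fun g hg => ?_⟩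
  have hl : (basisMonomials σ F).constr F (fun m => l (monomial m 1)) = l :=
    (basisMonomials σ F).ext fun m => by rw [Module.Basis.constr_basis, coe_basisMonomials]
  rw [← constr_basisMonomials_map]
  refine (constr_basisMonomials_congr fun m hm => ?_).trans (LinearMap.congr_fun hl _)
  rw [dif_pos (hC _ hg m hm), D.subtype_apply]

/-- Over a field, non-membership in the span of finitely many vectors is witnessed by a linear
functional, and only finitely many of its coefficients matter. -/
theorem eventually_map_notMem_filteredSpan {γ : ℝ} (hfin : {m | ν m ≤ γ}.Finite) {J : Finset τ}
    {r : MvPolynomial σ F} (hr : r ∉ filteredSpan ν h J γ) :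
    ∀ᶠ C : Finset F in atTop, ∀ (h' : τ → MvPolynomial σ (coeffSubring C))
        (r' : MvPolynomial σ (coeffSubring C)),
      (∀ i, map (coeffSubring C).subtype (h' i) = h i) → map (coeffSubring C).subtype r' = r →
      ∀ {K : Type u} [Field K] (φ : coeffSubring C →+* K),
        map φ r' ∉ filteredSpan ν (fun i => map φ (h' i)) J γ := by
  obtain ⟨l, hlr, hl⟩ := Submodule.exists_le_ker_of_notMem hr
  let T : Set (MvPolynomial σ F) :=
    insert r (Set.image2 (fun i m => h i * monomial m 1) J {m | ν m ≤ γ})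
  have hT : T.Finite := (J.finite_toSet.image2 _ hfin).insert r
  filter_upwards [eventually_exists_constr_eq ((l r)⁻¹ • l) hT] with C ⟨c, hc⟩ h' r' hh' hr' K _ φ
  have hker : filteredSpan ν (fun i => map φ (h' i)) J γ ≤
      LinearMap.ker ((basisMonomials σ K).constr K fun m => φ (c m)) := by
    refine filteredSpan_le_iff.2 fun i hi m hm => ?_
    have hmap : MvPolynomial.map (coeffSubring C).subtype (h' i * monomial m 1) =
        h i * monomial m 1 := by rw [map_mul, hh', map_monomial, map_one]
    have hzero : (basisMonomials σ _).constr (coeffSubring C) c (h' i * monomial m 1) = 0 := by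
      refine (coeffSubring C).subtype_injective ?_
      rw [hc _ (hmap ▸ Or.inr ⟨i, hi, m, hm, rfl⟩), hmap, map_zero, LinearMap.smul_apply,
        hl (filteredSpan_le_iff.1 le_rfl i hi m hm), smul_zero]
    rw [LinearMap.mem_ker, ← map_one φ, ← map_monomial, ← map_mul, constr_basisMonomials_map,
      hzero, map_zero]
  have hone : (basisMonomials σ _).constr (coeffSubring C) c r' = 1 := by
    refine (coeffSubring C).subtype_injective ?_
    rw [hc r' (hr' ▸ Or.inl rfl), hr', map_one, LinearMap.smul_apply, smul_eq_mul,
      inv_mul_cancel₀ hlr]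
  intro hmem
  have hzero := LinearMap.mem_ker.1 (hker hmem)
  rw [constr_basisMonomials_map, hone, map_one] at hzero
  exact one_ne_zero hzero

theorem filteredRegular [Finite σ] [Fintype τ] [DecidableEq τ] {V : Finset (σ →₀ ℕ)}
    (hν : IsNewtonWeight ν V) (hcard : Nat.card τ ≤ Nat.card σ) (h1 : ∀ i, h i ∈ weightLE F ν 1)
    {N : ℕ} (hN : ∀ v ∈ V, monomial (N • v) 1 ∈ lowerPart ν h N) : FilteredRegular ν h := by
  intro J α r hr hmem
  by_contra hnot
  obtain ⟨C, ⟨h', hh'⟩, ⟨r', hr'⟩, hV, hideal, hspan⟩ :=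
    ((eventually_exists_forall_map_subtype_eq h).and <| (eventually_exists_map_subtype_eq r).and <|
      ((eventually_all_finset V).2 fun v hv => eventually_map_mem_lowerPart (hN v hv)).and <|
      (eventually_map_mem_span hmem).and <|
      eventually_map_notMem_filteredSpan (hν.finite_setOf_le (α - 1)) hnot).exists
  obtain ⟨K, _, _, ⟨φ⟩⟩ := exists_finite_field_ringHom C
  refine hspan h' r' hh' hr' φ (filteredRegular_of_finite hν hcard (N := N)
    (fun i => map_mem_restrictSupport φ (hh' i ▸ h1 i)) (fun v hv => ?_) J α _
    (map_mem_restrictSupport φ (hr' ▸ hr)) ?_)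
  · have := hV v hv h' (monomial (N • v) 1) hh' (by rw [map_monomial, map_one]) φ
    rwa [map_monomial, map_one] at this
  · have := hideal h' ((∏ i ∈ Jᶜ, h' i) * r') hh' (by simp only [map_mul, map_prod, hh', hr']) φ
    rwa [map_mul, map_prod] at this

end Descent

/-! ### Dimensions -/

section Dimensions

open Module

theorem finrank_map_mkQ_sup_add {F W : Type*} [Field F] [AddCommGroup W] [Module F W]
    {A B : Submodule F W} (L : Submodule F W) (hAB : A ≤ B) [FiniteDimensional F B] :
    finrank F ((B ⊔ L).map (A ⊔ L).mkQ) + finrank F A + finrank F ↥(B ⊓ L) =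
      finrank F B + finrank F ↥(A ⊓ L) := by
  have : FiniteDimensional F A := Submodule.finiteDimensional_of_le hAB
  have hmap : (B ⊔ L).map (A ⊔ L).mkQ = LinearMap.range ((A ⊔ L).mkQ ∘ₗ B.subtype) := by
    rw [LinearMap.range_comp, Submodule.range_subtype, Submodule.map_sup, sup_eq_left,
      Submodule.map_le_iff_le_comap, Submodule.comap_map_eq, Submodule.ker_mkQ]
    exact le_sup_right.trans le_sup_right
  have hker : (LinearMap.ker ((A ⊔ L).mkQ ∘ₗ B.subtype)).map B.subtype = A ⊔ B ⊓ L := by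
    rw [LinearMap.ker_comp, Submodule.ker_mkQ, Submodule.map_comap_subtype, inf_comm,
      sup_inf_assoc_of_le L hAB, inf_comm L]
  have hrank := LinearMap.finrank_range_add_finrank_ker ((A ⊔ L).mkQ ∘ₗ B.subtype)
  rw [← Submodule.finrank_map_subtype_eq, hker] at hrank
  have hsup := Submodule.finrank_sup_add_finrank_inf_eq A (B ⊓ L)
  rw [← inf_assoc, inf_eq_left.2 hAB] at hsup
  rw [hmap]
  lia

variable {F : Type*} [Field F] {σ τ : Type*} {ν : (σ →₀ ℕ) → ℝ} {h h' : τ → MvPolynomial σ F}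

theorem finiteDimensional_weightLE {α : ℝ} (hfin : {m | ν m ≤ α}.Finite) :
    FiniteDimensional F (weightLE F ν α) :=
  have : Finite {m | ν m ≤ α} := hfin
  Module.Finite.of_basis (basisRestrictSupport F {m | ν m ≤ α})

theorem exists_weightLT_eq_weightLE (hfin : ∀ β, {m | ν m ≤ β}.Finite) (α : ℝ) :
    ∃ β, weightLT F ν α = weightLE F ν β := by
  obtain ⟨β, hβ, hβα⟩ := (((eventually_all_finite (hfin α)).2 fun m _ =>
    eventually_imp_distrib_left.2 fun hm : ν m < α =>
      mem_of_superset (Ioo_mem_nhdsLT hm) fun _ hβ => hβ.1.le).and self_mem_nhdsWithin).exists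
  exact ⟨β, congrArg _ (Set.ext fun m =>
    ⟨fun (hm : ν m < α) => hβ m hm.le hm, fun hm => lt_of_le_of_lt hm hβα⟩)⟩

theorem filteredSpan_le_span (J : Set τ) (γ : ℝ) :
    filteredSpan ν h J γ ≤ (Ideal.span (h '' J)).restrictScalars F :=
  filteredSpan_le_iff.2 fun _ hi _ _ =>
    Ideal.mul_mem_right _ _ (Ideal.subset_span (Set.mem_image_of_mem h hi))

variable [Fintype τ] [DecidableEq τ]

theorem FilteredRegular.ne_zero (hreg : FilteredRegular ν h) (j : τ) : h j ≠ 0 := by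
  intro hj
  have hprod : ∏ i ∈ (∅ : Finset τ)ᶜ, h i = 0 := Finset.prod_eq_zero (i := j) (by simp) hj
  have hmem := hreg ∅ (ν 0) 1 (monomial_mem_weightLE le_rfl 1)
    (by rw [hprod, zero_mul]; exact zero_mem _)
  simp [filteredSpan] at hmem

theorem FilteredRegular.map_mulLeft_weightLE_inf (hreg : FilteredRegular ν h)
    (hν : ∀ a b, ν (a + b) ≤ ν a + ν b) (h1 : ∀ i, h i ∈ weightLE F ν 1) {j : τ} {J : Finset τ}
    (hj : j ∉ J) (γ : ℝ) :
    (weightLE F ν γ).map (LinearMap.mulLeft F (h j)) ⊓ filteredSpan ν h J γ =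
      (filteredSpan ν h J (γ - 1)).map (LinearMap.mulLeft F (h j)) := by
  refine le_antisymm ?_ (le_inf (Submodule.map_mono (filteredSpan_le_weightLE hν h1 J γ)) ?_)
  · rintro _ ⟨⟨r, hr, rfl⟩, hJ⟩
    refine ⟨r, hreg J γ r hr ?_, rfl⟩
    rw [← Finset.prod_erase_mul _ _ (Finset.mem_compl.2 hj), mul_assoc]
    have hspan : h j * r ∈ Ideal.span (h '' J) := filteredSpan_le_span (J : Set τ) γ hJ
    exact Ideal.mul_mem_left _ _ hspan
  · rintro _ ⟨r, hr, rfl⟩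
    have hmul : h j * r ∈ weightLE F ν 1 * filteredSpan ν h J (γ - 1) :=
      Submodule.mul_mem_mul (h1 j) hr
    simpa only [add_sub_cancel, LinearMap.mulLeft_apply] using
      weightLE_mul_filteredSpan_le hν (J : Set τ) 1 (γ - 1) hmul

theorem FilteredRegular.finrank_filteredSpan_insert (hreg : FilteredRegular ν h)
    (hν : ∀ a b, ν (a + b) ≤ ν a + ν b) (hfin : ∀ β, {m | ν m ≤ β}.Finite)
    (h1 : ∀ i, h i ∈ weightLE F ν 1) {j : τ} {J : Finset τ} (hj : j ∉ J) (γ : ℝ) :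
    finrank F (filteredSpan ν h (insert j J : Finset τ) γ) +
        finrank F (filteredSpan ν h J (γ - 1)) =
      finrank F (weightLE F ν γ) + finrank F (filteredSpan ν h J γ) := by
  have hinj : Function.Injective (LinearMap.mulLeft F (h j)) :=
    mul_right_injective₀ (hreg.ne_zero j)
  have := finiteDimensional_weightLE (F := F) (hfin γ)
  have := finiteDimensional_weightLE (F := F) (hfin (γ + 1))
  have hle := filteredSpan_le_weightLE hν h1 J (γ + 1)
  rw [add_sub_cancel_right] at hle
  have : FiniteDimensional F (filteredSpan ν h J γ) := Submodule.finiteDimensional_of_le hle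
  have hsum := Submodule.finrank_sup_add_finrank_inf_eq
    ((weightLE F ν γ).map (LinearMap.mulLeft F (h j))) (filteredSpan ν h J γ)
  rwa [hreg.map_mulLeft_weightLE_inf hν h1 hj, ← filteredSpan_insert, ← Finset.coe_insert,
    ← (Submodule.equivMapOfInjective _ hinj _).finrank_eq,
    ← (Submodule.equivMapOfInjective _ hinj _).finrank_eq] at hsum

theorem FilteredRegular.finrank_filteredSpan_eq (hreg : FilteredRegular ν h)
    (hreg' : FilteredRegular ν h') (hν : ∀ a b, ν (a + b) ≤ ν a + ν b)
    (hfin : ∀ β, {m | ν m ≤ β}.Finite) (h1 : ∀ i, h i ∈ weightLE F ν 1)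
    (h1' : ∀ i, h' i ∈ weightLE F ν 1) (J : Finset τ) (γ : ℝ) :
    finrank F (filteredSpan ν h J γ) = finrank F (filteredSpan ν h' J γ) := by
  induction J using Finset.induction_on generalizing γ with
  | empty =>
    rw [Finset.coe_empty, filteredSpan, filteredSpan, Set.image_empty, Set.image_empty]
  | insert j J hj ih =>
    have hrank := hreg.finrank_filteredSpan_insert hν hfin h1 hj γ
    have hrank' := hreg'.finrank_filteredSpan_insert hν hfin h1' hj γ
    rw [ih, ih] at hrank
    lia

theorem FilteredRegular.weightLE_inf_span (hreg : FilteredRegular ν h)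
    (hν : ∀ a b, ν (a + b) ≤ ν a + ν b) (h1 : ∀ i, h i ∈ weightLE F ν 1) (α : ℝ) :
    weightLE F ν α ⊓ (Ideal.span (Set.range h)).restrictScalars F =
      filteredSpan ν h (Finset.univ : Finset τ) (α - 1) := by
  rw [← Set.image_univ, ← Finset.coe_univ]
  refine le_antisymm ?_ (le_inf (filteredSpan_le_weightLE hν h1 _ α) (filteredSpan_le_span _ _))
  rintro r ⟨hr, hspan⟩
  exact hreg Finset.univ α r hr (by simpa using hspan)

theorem FilteredRegular.finrank_gr_eq (hreg : FilteredRegular ν h) (hreg' : FilteredRegular ν h')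
    (hν : ∀ a b, ν (a + b) ≤ ν a + ν b) (hfin : ∀ β, {m | ν m ≤ β}.Finite)
    (h1 : ∀ i, h i ∈ weightLE F ν 1) (h1' : ∀ i, h' i ∈ weightLE F ν 1) (α : ℝ) :
    finrank F ((weightLE F ν α ⊔ (Ideal.span (Set.range h)).restrictScalars F).map
        (weightLT F ν α ⊔ (Ideal.span (Set.range h)).restrictScalars F).mkQ) =
      finrank F ((weightLE F ν α ⊔ (Ideal.span (Set.range h')).restrictScalars F).map
        (weightLT F ν α ⊔ (Ideal.span (Set.range h')).restrictScalars F).mkQ) := by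
  have := finiteDimensional_weightLE (F := F) (hfin α)
  obtain ⟨β, hβ⟩ := exists_weightLT_eq_weightLE (F := F) hfin α
  have hle : weightLE F ν β ≤ weightLE F ν α := hβ ▸ weightLT_le_weightLE
  have hrank := finrank_map_mkQ_sup_add ((Ideal.span (Set.range h)).restrictScalars F) hle
  have hrank' := finrank_map_mkQ_sup_add ((Ideal.span (Set.range h')).restrictScalars F) hle
  rw [hreg.weightLE_inf_span hν h1, hreg.weightLE_inf_span hν h1,
    hreg.finrank_filteredSpan_eq hreg' hν hfin h1 h1',
    hreg.finrank_filteredSpan_eq hreg' hν hfin h1 h1' Finset.univ (β - 1)] at hrank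
  rw [hreg'.weightLE_inf_span hν h1', hreg'.weightLE_inf_span hν h1'] at hrank'
  rw [hβ]
  lia

end Dimensions

/-! ### The Newton function -/

section NewtonFunction

open scoped Pointwise

theorem mem_smul_of_le {E : Type*} [AddCommGroup E] [Module ℝ E] {P : Set E} (hP : Convex ℝ P)
    (h0 : 0 ∈ P) {x : E} {s r : ℝ} (hs : 0 ≤ s) (hsr : s ≤ r) (hx : x ∈ s • P) : x ∈ r • P := by
  rw [← add_sub_cancel s r, hP.add_smul hs (sub_nonneg.2 hsr)]
  exact ⟨x, hx, 0, Set.zero_mem_smul_set h0, add_zero x⟩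

theorem gauge_le_iff_mem_smul {E : Type*} [AddCommGroup E] [Module ℝ E] [TopologicalSpace E]
    [ContinuousSMul ℝ E] {P : Set E} (hP : Convex ℝ P) (hclosed : IsClosed P) (h0 : 0 ∈ P) {x : E}
    (hx : ∃ t : ℝ, 0 < t ∧ x ∈ t • P) {r : ℝ} (hr : 0 < r) : gauge P x ≤ r ↔ x ∈ r • P := by
  refine ⟨fun hxr => ?_, gauge_le_of_mem hr.le⟩
  rw [Set.mem_smul_set_iff_inv_smul_mem₀ hr.ne']
  have hlim : Tendsto (fun t : ℝ => t⁻¹ • x) (𝓝[>] r) (𝓝 (r⁻¹ • x)) :=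
    ((tendsto_inv₀ hr.ne').smul_const x).mono_left nhdsWithin_le_nhds
  refine hclosed.mem_of_tendsto hlim ?_
  filter_upwards [self_mem_nhdsWithin] with t ht
  obtain ⟨s, ⟨hs, hxs⟩, hst⟩ := exists_lt_of_csInf_lt hx (hxr.trans_lt ht)
  rw [← Set.mem_smul_set_iff_inv_smul_mem₀ (hr.trans ht).ne']
  exact mem_smul_of_le hP h0 (le_of_lt hs) hst.le hxs

theorem sum_smul_mem_smul {ι E : Type*} [AddCommGroup E] [Module ℝ E] {P : Set E}
    (hP : Convex ℝ P) (hne : P.Nonempty) {s : Finset ι} {d : ι → ℝ} (hd : ∀ i ∈ s, 0 ≤ d i)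
    {z : ι → E} (hz : ∀ i ∈ s, z i ∈ P) : ∑ i ∈ s, d i • z i ∈ (∑ i ∈ s, d i) • P := by
  classical
  induction s using Finset.induction_on with
  | empty => simp [Set.zero_smul_set hne]
  | insert i s hi ih =>
    rw [Finset.forall_mem_insert] at hd hz
    rw [Finset.sum_insert hi, Finset.sum_insert hi, hP.add_smul hd.1 (Finset.sum_nonneg hd.2)]
    exact Set.add_mem_add (Set.smul_mem_smul_set hz.1) (ih hd.2 hz.2)

variable {σ : Type*}

@[simp]
theorem toR_zero : toR (0 : σ →₀ ℕ) = 0 := by ext i; simp [toR]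

theorem toR_add (a b : σ →₀ ℕ) : toR (a + b) = toR a + toR b := by ext i; simp [toR]

theorem toR_nsmul (k : ℕ) (a : σ →₀ ℕ) : toR (k • a) = (k : ℝ) • toR a := by ext i; simp [toR]

theorem toR_injective : Function.Injective (toR : (σ →₀ ℕ) → σ → ℝ) := fun a b hab => by
  ext i
  exact Nat.cast_injective (R := ℝ) (congrFun hab i)

/-- The exponents whose convex hull is the Newton polytope: the origin and the support. -/
noncomputable def originSupport (f : MvPolynomial σ ℂ) : Finset (σ →₀ ℕ) :=
  open Classical in insert 0 f.support

variable {f : MvPolynomial σ ℂ}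

theorem zero_mem_originSupport : 0 ∈ originSupport f := by simp [originSupport]

theorem mem_originSupport_of_mem_support {m : σ →₀ ℕ} (hm : m ∈ f.support) :
    m ∈ originSupport f := by
  simp [originSupport, mem_support_iff.1 hm]

theorem newtonPolytope_eq (f : MvPolynomial σ ℂ) :
    newtonPolytope f = convexHull ℝ (toR '' (originSupport f : Set (σ →₀ ℕ))) := by
  simp [newtonPolytope, originSupport, Set.image_insert_eq]

theorem convex_newtonPolytope (f : MvPolynomial σ ℂ) : Convex ℝ (newtonPolytope f) :=
  convex_convexHull ℝ _

theorem toR_mem_newtonPolytope {v : σ →₀ ℕ} (hv : v ∈ originSupport f) :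
    toR v ∈ newtonPolytope f := by
  rw [newtonPolytope_eq]
  exact subset_convexHull ℝ _ (Set.mem_image_of_mem _ hv)

theorem zero_mem_newtonPolytope (f : MvPolynomial σ ℂ) : 0 ∈ newtonPolytope f := by
  simpa using toR_mem_newtonPolytope (zero_mem_originSupport (f := f))

theorem isCompact_newtonPolytope (f : MvPolynomial σ ℂ) : IsCompact (newtonPolytope f) := by
  rw [newtonPolytope_eq]
  exact ((originSupport f).finite_toSet.image _).isCompact_convexHull ℝ

theorem nu_le_one {v : σ →₀ ℕ} (hv : v ∈ originSupport f) : nu f (toR v) ≤ 1 :=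
  gauge_le_one_of_mem (toR_mem_newtonPolytope hv)

theorem exists_sum_eq_of_mem_smul_newtonPolytope {x : σ → ℝ} {r : ℝ} (hr : 0 ≤ r)
    (hx : x ∈ r • newtonPolytope f) :
    ∃ d : (σ →₀ ℕ) → ℝ, (∀ v ∈ originSupport f, 0 ≤ d v) ∧ ∑ v ∈ originSupport f, d v = r ∧
      ∑ v ∈ originSupport f, d v • toR v = x := by
  classical
  obtain ⟨y, hy, rfl⟩ := hx
  rw [newtonPolytope_eq, ← Finset.coe_image, Finset.mem_convexHull'] at hy
  obtain ⟨w, hw0, hw1, rfl⟩ := hy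
  rw [Finset.sum_image toR_injective.injOn] at hw1 ⊢
  refine ⟨fun v => r * w (toR v), fun v hv => ?_, ?_, ?_⟩
  · exact mul_nonneg hr (hw0 _ (Finset.mem_image_of_mem _ hv))
  · rw [← Finset.mul_sum, hw1, mul_one]
  · simp only [Finset.smul_sum, mul_smul]

theorem sum_smul_toR_mem_smul_newtonPolytope {d : (σ →₀ ℕ) → ℝ}
    (hd : ∀ v ∈ originSupport f, 0 ≤ d v) :
    ∑ v ∈ originSupport f, d v • toR v ∈ (∑ v ∈ originSupport f, d v) • newtonPolytope f :=
  sum_smul_mem_smul (convex_newtonPolytope f) ⟨0, zero_mem_newtonPolytope f⟩ hd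
    fun _ => toR_mem_newtonPolytope

theorem Convenient.exists_mem_smul_newtonPolytope (hf : Convenient f) (m : σ →₀ ℕ) :
    ∃ t : ℝ, 0 < t ∧ toR m ∈ t • newtonPolytope f := by
  induction m using Finsupp.induction_linear with
  | zero => exact ⟨1, one_pos, by simpa using zero_mem_newtonPolytope f⟩
  | add a b ha hb =>
    obtain ⟨s, hs, has⟩ := ha
    obtain ⟨t, ht, hbt⟩ := hb
    refine ⟨s + t, add_pos hs ht, ?_⟩
    rw [toR_add, (convex_newtonPolytope f).add_smul hs.le ht.le]
    exact Set.add_mem_add has hbt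
  | single i k =>
    obtain ⟨n, hn, hc⟩ := hf i
    have hn0 : (0 : ℝ) < n := by exact_mod_cast hn
    have hmem := toR_mem_newtonPolytope (mem_originSupport_of_mem_support (mem_support_iff.2 hc))
    have hsingle : toR (Finsupp.single i k) = ((k : ℝ) / n) • toR (Finsupp.single i n) := by
      ext j
      obtain rfl | hj := eq_or_ne j i
      · simp [toR, hn0.ne']
      · simp [toR, hj.symm]
    refine ⟨k / n + 1, by positivity, mem_smul_of_le (convex_newtonPolytope f)
      (zero_mem_newtonPolytope f) (by positivity) (le_add_of_nonneg_right zero_le_one) ?_⟩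
    exact hsingle ▸ Set.smul_mem_smul_set hmem

theorem Convenient.nu_le_iff (hf : Convenient f) (m : σ →₀ ℕ) {r : ℝ} (hr : 0 < r) :
    nu f (toR m) ≤ r ↔ toR m ∈ r • newtonPolytope f :=
  gauge_le_iff_mem_smul (convex_newtonPolytope f) (isCompact_newtonPolytope f).isClosed
    (zero_mem_newtonPolytope f) (hf.exists_mem_smul_newtonPolytope m) hr

theorem Convenient.nu_add_le (hf : Convenient f) (a b : σ →₀ ℕ) :
    nu f (toR (a + b)) ≤ nu f (toR a) + nu f (toR b) := by
  refine le_of_forall_pos_le_add fun ε hε => ?_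
  have ha : 0 < nu f (toR a) + ε / 2 := add_pos_of_nonneg_of_pos (gauge_nonneg _) (half_pos hε)
  have hb : 0 < nu f (toR b) + ε / 2 := add_pos_of_nonneg_of_pos (gauge_nonneg _) (half_pos hε)
  have hsum : nu f (toR (a + b)) ≤ (nu f (toR a) + ε / 2) + (nu f (toR b) + ε / 2) := by
    rw [hf.nu_le_iff _ (add_pos ha hb), toR_add, (convex_newtonPolytope f).add_smul ha.le hb.le]
    exact Set.add_mem_add ((hf.nu_le_iff a ha).1 (by linarith))
      ((hf.nu_le_iff b hb).1 (by linarith))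
  linarith

theorem Convenient.exists_apply_le_mul_nu [Finite σ] (hf : Convenient f) :
    ∃ L : ℝ, 0 ≤ L ∧ ∀ (m : σ →₀ ℕ) i, (m i : ℝ) ≤ L * nu f (toR m) := by
  have := Fintype.ofFinite σ
  obtain ⟨L, hL, hball⟩ := (isCompact_newtonPolytope f).isBounded.exists_pos_norm_le
  refine ⟨L, hL.le, fun m i => ?_⟩
  rw [← div_le_iff₀' hL]
  refine le_of_forall_gt_imp_ge_of_dense fun r hr => ?_
  have hr0 : 0 < r := (gauge_nonneg _).trans_lt hr
  obtain ⟨y, hy, hym⟩ := (hf.nu_le_iff m hr0).1 hr.le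
  have hmi : (m i : ℝ) = r * y i := (congrFun hym i).symm
  rw [div_le_iff₀ hL, hmi]
  exact mul_le_mul_of_nonneg_left
    ((le_abs_self _).trans ((norm_le_pi_norm y i).trans (hball y hy))) hr0.le

theorem Convenient.exists_eq_add_nsmul (hf : Convenient f) (N : ℕ) : ∃ C : ℝ, ∀ m,
    C < nu f (toR m) →
      ∃ v ∈ originSupport f, ∃ m', m = m' + N • v ∧ nu f (toR m') + N ≤ nu f (toR m) := by
  classical
  refine ⟨(originSupport f).card * N, fun m hm => ?_⟩
  have hpos : 0 < nu f (toR m) := (by positivity : (0 : ℝ) ≤ _).trans_lt hm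
  obtain ⟨d, hd, hsum, hdm⟩ :=
    exists_sum_eq_of_mem_smul_newtonPolytope hpos.le ((hf.nu_le_iff m hpos).1 le_rfl)
  obtain ⟨v, hv, hNv⟩ : ∃ v ∈ originSupport f, (N : ℝ) < d v :=
    Finset.exists_lt_of_sum_lt (by simpa [hsum] using hm)
  have hle : N • v ≤ m := fun i => by
    have hterm : d v * v i ≤ m i := by
      have hmi : (m i : ℝ) = ∑ w ∈ originSupport f, d w * w i := by
        simpa [toR] using (congrFun hdm i).symm
      rw [hmi]
      exact Finset.single_le_sum (f := fun w : σ →₀ ℕ => d w * w i)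
        (fun w hw => mul_nonneg (hd w hw) (Nat.cast_nonneg _)) hv
    exact_mod_cast (mul_le_mul_of_nonneg_right hNv.le (Nat.cast_nonneg (v i))).trans hterm
  obtain ⟨m', rfl⟩ := exists_add_of_le hle
  refine ⟨v, hv, m', add_comm _ _, ?_⟩
  have hd' : ∀ w ∈ originSupport f, 0 ≤ d w - if w = v then (N : ℝ) else 0 := fun w hw => by
    split_ifs with hwv
    · exact sub_nonneg.2 (hwv ▸ hNv.le)
    · simpa using hd w hw
  have hm' : toR (N • v + m') - (N : ℝ) • toR v = toR m' := by simp [toR_add, toR_nsmul]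
  have hmem := sum_smul_toR_mem_smul_newtonPolytope hd'
  simp only [sub_smul, ite_smul, zero_smul, Finset.sum_sub_distrib, Finset.sum_ite_eq', hv, if_true,
    hdm, hsum, hm'] at hmem
  refine le_sub_iff_add_le.1 (gauge_le_of_mem ?_ hmem)
  simpa [Finset.sum_sub_distrib, hsum, hv] using Finset.sum_nonneg hd'

theorem nonneg_of_frequently_nonneg_mul_add {β C : ℝ}
    (h : ∃ᶠ q : ℕ in atTop, 0 ≤ q * β + C) : 0 ≤ β := by
  by_contra! hβ
  refine h (((tendsto_atBot_add_const_right _ C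
    (tendsto_natCast_atTop_atTop.atTop_mul_const_of_neg hβ)).eventually_lt_atBot 0).mono ?_)
  exact fun q => not_le.2

theorem Convenient.nu_le_of_frequently (hf : Convenient f) {m a : σ →₀ ℕ} {β C : ℝ}
    (h : ∃ᶠ q : ℕ in atTop, nu f (toR (q • m + a)) ≤ q * β + C) : nu f (toR m) ≤ β := by
  have hβ : 0 ≤ β := nonneg_of_frequently_nonneg_mul_add (h.mono fun q => (gauge_nonneg _).trans)
  refine le_of_forall_pos_le_add fun ε hε => ?_
  have hpos : 0 < β + ε := by linarith
  rw [hf.nu_le_iff m hpos, Set.mem_smul_set_iff_inv_smul_mem₀ hpos.ne']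
  have hlim : Tendsto (fun q : ℕ => (β + ε)⁻¹ • (toR m + (q : ℝ)⁻¹ • toR a)) atTop
      (𝓝 ((β + ε)⁻¹ • toR m)) := by
    simpa using ((tendsto_inv_atTop_nhds_zero_nat (𝕜 := ℝ)).smul_const (toR a)).const_add (toR m)
      |>.const_smul (β + ε)⁻¹
  refine (isCompact_newtonPolytope f).isClosed.mem_of_frequently_of_tendsto ?_ hlim
  have hlarge : ∀ᶠ q : ℕ in atTop, C ≤ q * ε :=
    (tendsto_natCast_atTop_atTop.atTop_mul_const hε).eventually_ge_atTop C
  refine (h.and_eventually (hlarge.and (eventually_gt_atTop 0))).mono ?_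
  rintro q ⟨hq, hCq, hq0⟩
  have hq0' : (0 : ℝ) < q := by exact_mod_cast hq0
  have hmem := (hf.nu_le_iff (q • m + a) (mul_pos hq0' hpos)).1 (by linarith)
  rw [Set.mem_smul_set_iff_inv_smul_mem₀ (mul_pos hq0' hpos).ne', toR_add, toR_nsmul, mul_inv_rev,
    mul_smul, smul_add, inv_smul_smul₀ hq0'.ne'] at hmem
  exact hmem

theorem Convenient.isNewtonWeight [Finite σ] (hf : Convenient f) :
    IsNewtonWeight (fun m => nu f (toR m)) (originSupport f) where
  nonneg _ := gauge_nonneg _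
  add_le := hf.nu_add_le
  exists_apply_le := hf.exists_apply_le_mul_nu
  exists_add_nsmul := hf.exists_eq_add_nsmul
  le_of_frequently _ _ _ _ := hf.nu_le_of_frequently

end NewtonFunction

/-! ### Gordan's alternative -/

section Alternative

variable {K W : Type*} [Field K] [LinearOrder K] [IsStrictOrderedRing K] [AddCommGroup W]
  [Module K W]

theorem convexHull_subset_setOf_pos {t : Set W} {l : W →ₗ[K] K} (hl : ∀ x ∈ t, 0 < l x) :
    convexHull K t ⊆ {x | 0 < l x} :=
  convexHull_min hl (convex_halfSpace_gt l.isLinear 0)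

theorem exists_pos_insert {t : Set W} (ht : t.Finite) {Z : Submodule K W} {y : W} (hy : y ∉ Z)
    {l : W →ₗ[K] K} (hlZ : Z ≤ l.ker) (hly : l y = 0) (hlt : ∀ x ∈ t, 0 < l x) :
    ∃ l' : W →ₗ[K] K, Z ≤ l'.ker ∧ ∀ x ∈ insert y t, 0 < l' x := by
  obtain ⟨μ, hμy, hZμ⟩ := Submodule.exists_le_ker_of_notMem hy
  obtain ⟨M, hM⟩ : ∃ M : K, ∀ x ∈ t, -(μ x / μ y / l x) < M := by
    obtain ⟨M, hM⟩ := (ht.image fun x => -(μ x / μ y / l x)).bddAbove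
    exact ⟨M + 1, fun x hx => (hM (Set.mem_image_of_mem _ hx)).trans_lt (lt_add_one M)⟩
  refine ⟨M • l + (μ y)⁻¹ • μ, fun z hz => ?_, Set.forall_mem_insert.2 ⟨?_, fun x hx => ?_⟩⟩
  · simp [LinearMap.mem_ker.1 (hlZ hz), LinearMap.mem_ker.1 (hZμ hz)]
  · simp [hly, hμy]
  · have hMx := hM x hx
    rw [← neg_div, div_lt_iff₀ (hlt x hx), neg_lt_iff_pos_add, div_eq_inv_mul] at hMx
    simpa using hMx

theorem convexHull_insert_inter_nonempty {t : Set W} {Z : Submodule K W} {y : W}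
    {l : W →ₗ[K] K} (hlZ : Z ≤ l.ker) (hlt : ∀ x ∈ t, 0 < l x) (hly : l y ≤ 0)
    (h : (convexHull K t ∩ (Z ⊔ Submodule.span K {y} : Submodule K W)).Nonempty) :
    (convexHull K (insert y t) ∩ Z).Nonempty := by
  obtain ⟨x, hx, hxZ⟩ := h
  obtain ⟨z, hz, _, hw, rfl⟩ := Submodule.mem_sup.1 hxZ
  obtain ⟨a, rfl⟩ := Submodule.mem_span_singleton.1 hw
  have hpos : 0 < a * l y := by
    simpa [LinearMap.mem_ker.1 (hlZ hz)] using convexHull_subset_setOf_pos hlt hx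
  have ha : a < 0 := neg_of_mul_pos_left hpos hly
  have hden : 0 < 1 - a := by linarith
  refine ⟨(1 - a)⁻¹ • z, ?_, Z.smul_mem _ hz⟩
  have hcomb := convex_convexHull K (insert y t)
    (convexHull_mono (Set.subset_insert y t) hx) (subset_convexHull K _ (Set.mem_insert y t))
    (inv_nonneg.2 hden.le) (mul_nonneg (inv_nonneg.2 hden.le) (neg_nonneg.2 ha.le))
    (by field_simp; ring)
  convert hcomb using 1
  module

theorem exists_forall_pos_or_convexHull_inter_nonempty {t : Set W} (ht : t.Finite)
    (Z : Submodule K W) :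
    (∃ l : W →ₗ[K] K, Z ≤ l.ker ∧ ∀ x ∈ t, 0 < l x) ∨ (convexHull K t ∩ Z).Nonempty := by
  induction t, ht using Set.Finite.induction_on generalizing Z with
  | empty => exact Or.inl ⟨0, by simp⟩
  | @insert y t _ ht ih =>
    obtain ⟨l, hlZ, hlt⟩ | ⟨x, hx, hxZ⟩ := ih Z
    swap
    · exact Or.inr ⟨x, convexHull_mono (Set.subset_insert y t) hx, hxZ⟩
    by_cases hyZ : y ∈ Z
    · exact Or.inr ⟨y, subset_convexHull K _ (Set.mem_insert y t), hyZ⟩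
    obtain hly | hly := lt_or_ge 0 (l y)
    · exact Or.inl ⟨l, hlZ, Set.forall_mem_insert.2 ⟨hly, hlt⟩⟩
    obtain ⟨l', hl'Z, hl't⟩ | h := ih (Z ⊔ Submodule.span K {y})
    · exact Or.inl (exists_pos_insert ht hyZ (le_sup_left.trans hl'Z)
        (hl'Z (Submodule.mem_sup_right (Submodule.mem_span_singleton_self y))) hl't)
    · exact Or.inr (convexHull_insert_inter_nonempty hlZ hlt hly h)

variable {ι : Type*} [Fintype ι]

theorem exists_sum_smul_eq_of_mem_convexHull_image {x : ι → W} {T : Set ι} {y : W}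
    (hy : y ∈ convexHull K (x '' T)) :
    ∃ c ∈ stdSimplex K ι, (∀ i ∉ T, c i = 0) ∧ ∑ i, c i • x i = y := by
  classical
  let C : Set (ι → K) := stdSimplex K ι ∩ {c | ∀ i ∉ T, c i = 0}
  have hC : Convex K C := (convex_stdSimplex K ι).inter fun a ha b hb r s _ _ _ i hi => by
    simp [ha i hi, hb i hi]
  have himage : x '' T ⊆ Fintype.linearCombination K x '' C := by
    rintro _ ⟨i, hi, rfl⟩
    refine ⟨Pi.single i 1, ⟨single_mem_stdSimplex K i, fun j hj => ?_⟩, by simp⟩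
    exact Pi.single_eq_of_ne (ne_of_mem_of_not_mem hi hj).symm 1
  obtain ⟨c, ⟨hc, hcT⟩, rfl⟩ := convexHull_min himage (hC.linear_image _) hy
  exact ⟨c, hc, hcT, rfl⟩

theorem exists_forall_pos_or_exists_sum_smul_eq_zero (x : ι → W) (S : Set ι) :
    (∃ l : W →ₗ[K] K, (∀ i ∈ S, l (x i) = 0) ∧ ∀ i ∉ S, 0 < l (x i)) ∨
      ∃ c : ι → K, (∀ i ∉ S, 0 ≤ c i) ∧ (∃ i ∉ S, 0 < c i) ∧ ∑ i, c i • x i = 0 := by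
  obtain ⟨l, hlS, hl⟩ | ⟨y, hy, hyS⟩ := exists_forall_pos_or_convexHull_inter_nonempty
    (Set.toFinite (x '' Sᶜ)) (Submodule.span K (x '' S))
  · exact Or.inl ⟨l, fun i hi => hlS (Submodule.subset_span (Set.mem_image_of_mem x hi)),
      fun i hi => hl _ (Set.mem_image_of_mem x hi)⟩
  · right
    obtain ⟨c, hc, hcS, rfl⟩ := exists_sum_smul_eq_of_mem_convexHull_image hy
    obtain ⟨e, he, hesum⟩ := (Finsupp.mem_span_image_iff_linearCombination K).1 hyS
    have he0 : ∀ i ∉ S, e i = 0 := fun i hi => by_contra fun h =>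
      hi ((Finsupp.mem_supported K e).1 he (Finsupp.mem_support_iff.2 h))
    obtain ⟨i, -, hi⟩ : ∃ i ∈ Finset.univ, 0 < c i :=
      Finset.exists_lt_of_sum_lt (by simp [hc.2])
    have hiS : i ∉ S := fun hiS => hi.ne' (hcS i (not_not_intro hiS))
    refine ⟨fun i => c i - e i, fun i hi => by simpa [he0 i hi] using hc.1 i,
      ⟨i, hiS, by simpa [he0 i hiS] using hi⟩, ?_⟩
    rw [Finsupp.linearCombination_apply, Finsupp.sum_fintype _ _ (by simp)] at hesum
    simp [sub_smul, Finset.sum_sub_distrib, hesum]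

end Alternative

theorem exists_pos_forall_intCast_eq_mul {ι : Type*} [Finite ι] (c : ι → ℚ) :
    ∃ D : ℕ, 0 < D ∧ ∃ z : ι → ℤ, ∀ i, (z i : ℚ) = D * c i := by
  cases nonempty_fintype ι
  refine ⟨∏ i, (c i).den, Finset.prod_pos fun i _ => (c i).den_pos, ?_⟩
  choose k hk using fun i => Finset.dvd_prod_of_mem (fun i => (c i).den) (Finset.mem_univ i)
  refine ⟨fun i => k i * (c i).num, fun i => ?_⟩
  rw [hk i]
  push_cast
  rw [mul_assoc, mul_left_comm, Rat.den_mul_eq_num]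

theorem exists_forall_sum_mul_lt_or_exists_int_relation {ι σ : Type*} [Fintype ι] [Fintype σ]
    (v : ι → σ →₀ ℕ) (S : Set ι) :
    (∃ (a : σ → ℚ) (c : ℚ), (∀ i ∈ S, ∑ k, a k * v i k = c) ∧ ∀ i ∉ S, ∑ k, a k * v i k < c) ∨
      ∃ z : ι → ℤ, (∀ i ∉ S, 0 ≤ z i) ∧ (∃ i ∉ S, 0 < z i) ∧ (∀ k, ∑ i, z i * v i k = 0) ∧
        ∑ i, z i = 0 := by
  classical
  let x : ι → (σ → ℚ) × ℚ := fun i => (fun k => v i k, 1)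
  obtain ⟨l, hlS, hl⟩ | ⟨c, hc, ⟨i, hiS, hi⟩, hsum⟩ :=
    exists_forall_pos_or_exists_sum_smul_eq_zero (K := ℚ) x S
  · left
    have hlx : ∀ i, l (x i) = l (0, 1) - ∑ k, -l (Pi.single k 1, 0) * v i k := fun i => by
      have hx : x i = (0, 1) + ∑ k, (v i k : ℚ) • ((Pi.single k 1, 0) : (σ → ℚ) × ℚ) := by
        ext k <;> simp [x, Prod.fst_sum, Prod.snd_sum, Pi.single_apply]
      simp [hx, map_sum, mul_comm, -Prod.smul_mk]
    refine ⟨fun k => -l (Pi.single k 1, 0), l (0, 1), fun i hi => ?_, fun i hi => ?_⟩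
    · linarith [hlx i, hlS i hi]
    · linarith [hlx i, hl i hi]
  · right
    obtain ⟨D, hD, z, hz⟩ := exists_pos_forall_intCast_eq_mul c
    have hD' : (0 : ℚ) < D := by exact_mod_cast hD
    have hzsum : ∑ i, (z i : ℚ) • x i = 0 := by
      simp only [hz, mul_smul, ← Finset.smul_sum, hsum, smul_zero]
    refine ⟨z, fun i hi => ?_, ⟨i, hiS, ?_⟩, fun k => ?_, ?_⟩
    · exact_mod_cast hz i ▸ mul_nonneg hD'.le (hc i hi)
    · exact_mod_cast hz i ▸ mul_pos hD' hi
    · have hk : ∑ i, (z i : ℚ) * v i k = 0 := by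
        simpa [x, Prod.fst_sum] using congrFun (congrArg Prod.fst hzsum) k
      exact_mod_cast hk
    · have h1 : ∑ i, (z i : ℚ) = 0 := by simpa [x, Prod.snd_sum] using congrArg Prod.snd hzsum
      exact_mod_cast h1

section Torus

theorem exists_comp_eq_of_ker_le {R M N Q : Type*} [Ring R] [AddCommGroup M] [AddCommGroup N]
    [AddCommGroup Q] [Module R M] [Module R N] [Module R Q] (hQ : Module.Baer R Q) {f : M →ₗ[R] N}
    {g : M →ₗ[R] Q} (h : f.ker ≤ g.ker) : ∃ e : N →ₗ[R] Q, e ∘ₗ f = g := by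
  obtain ⟨e, he⟩ := hQ.extension_property (f.ker.liftQ f le_rfl)
    (LinearMap.ker_eq_bot.1 (Submodule.ker_liftQ_eq_bot _ _ _ le_rfl)) (f.ker.liftQ g h)
  refine ⟨e, ?_⟩
  rw [← f.ker.liftQ_mkQ f le_rfl, ← LinearMap.comp_assoc, he, Submodule.liftQ_mkQ]

variable {K : Type*} [Field K] [IsAlgClosed K]

variable (K) in
theorem baer_additive_units : Module.Baer ℤ (Additive Kˣ) := by
  have hroot : ∀ {n : ℕ}, n ≠ 0 → Function.Surjective fun x : Additive Kˣ => n • x := by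
    intro n hn y
    obtain ⟨z, hz⟩ := IsAlgClosed.exists_pow_nat_eq (y.toMul : K) (Nat.pos_of_ne_zero hn)
    have hz0 : z ≠ 0 := fun h => y.toMul.ne_zero (by rw [← hz, h, zero_pow hn])
    exact ⟨Additive.ofMul (Units.mk0 z hz0),
      Additive.toMul.injective (Units.ext (by simpa using hz))⟩
  let _ : DivisibleBy (Additive Kˣ) ℕ := divisibleByOfSMulRightSurj _ _ hroot
  let _ : DivisibleBy (Additive Kˣ) ℤ := AddGroup.divisibleByIntOfDivisibleByNat _
  exact Module.Baer.of_divisible _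

theorem exists_units_prod_zpow_eq {ι σ : Type*} [Fintype ι] [Fintype σ] (v : ι → σ → ℤ)
    (χ : ι → Kˣ) (h : ∀ z : ι → ℤ, ∑ i, z i • v i = 0 → ∏ i, χ i ^ z i = 1) :
    ∃ x : σ → Kˣ, ∀ i, ∏ k, x k ^ v i k = χ i := by
  classical
  let φ : (ι → ℤ) →ₗ[ℤ] Additive Kˣ := Fintype.linearCombination ℤ fun i => Additive.ofMul (χ i)
  have hker : (Fintype.linearCombination ℤ v).ker ≤ φ.ker := fun z hz =>
    Additive.toMul.injective (by simpa [φ, Fintype.linearCombination_apply] using h z hz)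
  obtain ⟨e, he⟩ := exists_comp_eq_of_ker_le (baer_additive_units K) hker
  refine ⟨fun k => (e fun j => if k = j then 1 else 0).toMul, fun i => ?_⟩
  have hev : e (v i) = Additive.ofMul (χ i) := by
    simpa [φ] using LinearMap.congr_fun he (Pi.single i 1)
  rw [e.pi_apply_eq_sum_univ] at hev
  simpa using congrArg Additive.toMul hev

end Torus

section LowerIdeal

variable {σ τ ι R : Type*} [CommRing R] {v : ι → σ →₀ ℕ}

/-- The graded presentation `X i ↦ u ^ (v i) t` of the semigroup algebra of the cone over the
points `v i`; the power of `t` records the degree. -/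
noncomputable def toricMap (R : Type*) [CommRing R] (v : ι → σ →₀ ℕ) :
    MvPolynomial ι R →ₐ[R] Polynomial (MvPolynomial σ R) :=
  aeval fun i => Polynomial.C (monomial (v i) 1) * Polynomial.X

theorem toricMap_X (i : ι) :
    toricMap R v (X i) = Polynomial.C (monomial (v i) 1) * Polynomial.X :=
  aeval_X _ i

theorem toricMap_prod_X_pow [Fintype ι] (d : ι → ℕ) :
    toricMap R v (∏ i, X i ^ d i) =
      Polynomial.C (monomial (∑ i, d i • v i) 1) * Polynomial.X ^ ∑ i, d i := by
  rw [monomial_sum_one, map_prod Polynomial.C, ← Finset.prod_pow_eq_pow_sum,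
    ← Finset.prod_mul_distrib, map_prod]
  refine Finset.prod_congr rfl fun i _ => ?_
  rw [map_pow, toricMap_X, mul_pow, ← Polynomial.C_pow, monomial_pow, one_pow]

variable {ν : (σ →₀ ℕ) → ℝ} {h : τ → MvPolynomial σ R}

/-- The polynomials in the points `v i` each of whose homogeneous components, of degree `e` say,
becomes a member of `lowerPart ν h e` under `toricMap`. Its zero locus is where nondegeneracy is
tested. -/
noncomputable def lowerIdeal (hν : ∀ a b, ν (a + b) ≤ ν a + ν b) (hv : ∀ i, ν (v i) ≤ 1)
    (h : τ → MvPolynomial σ R) : Ideal (MvPolynomial ι R) where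
  carrier := {q | ∀ e : ℕ, (toricMap R v q).coeff e ∈ lowerPart ν h e}
  zero_mem' e := by simp
  add_mem' hp hq e := by
    rw [map_add, Polynomial.coeff_add]
    exact add_mem (hp e) (hq e)
  smul_mem' p q hq := by
    induction p using MvPolynomial.induction_on generalizing q with
    | C a =>
      intro e
      rw [smul_eq_mul, ← smul_eq_C_mul, map_smul, Polynomial.coeff_smul]
      exact Submodule.smul_mem _ a (hq e)
    | add p r hp hr =>
      intro e
      rw [add_smul, map_add, Polynomial.coeff_add]
      exact add_mem (hp q hq e) (hr q hq e)
    | mul_X p i hp =>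
      rw [smul_eq_mul, mul_assoc]
      refine hp _ fun e => ?_
      rw [map_mul, toricMap_X, mul_assoc, Polynomial.coeff_C_mul]
      cases e with
      | zero => simp
      | succ e =>
        rw [Polynomial.coeff_X_mul, Nat.cast_succ, add_comm]
        exact weightLE_mul_lowerPart_le hν 1 e
          (Submodule.mul_mem_mul (monomial_mem_weightLE (hv i) 1) (hq e))

variable {hν : ∀ a b, ν (a + b) ≤ ν a + ν b} {hv : ∀ i, ν (v i) ≤ 1}

theorem prod_X_pow_sub_mem_lowerIdeal [Fintype ι] {d b : ι → ℕ}
    (hvec : ∑ i, d i • v i = ∑ i, b i • v i) (hdeg : ∑ i, d i = ∑ i, b i) :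
    ∏ i, X i ^ d i - ∏ i, X i ^ b i ∈ lowerIdeal hν hv h := fun e => by
  rw [map_sub, toricMap_prod_X_pow, toricMap_prod_X_pow, hvec, hdeg, sub_self]
  simp

theorem sum_C_mul_X_mem_lowerIdeal {s : Finset ι} {c : ι → R}
    (hc : ∑ i ∈ s, monomial (v i) (c i) ∈ lowerPart ν h 1) :
    ∑ i ∈ s, C (c i) * X i ∈ lowerIdeal hν hv h := fun e => by
  have hmap : toricMap R v (∑ i ∈ s, C (c i) * X i) =
      Polynomial.C (∑ i ∈ s, monomial (v i) (c i)) * Polynomial.X := by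
    simp only [map_sum, Finset.sum_mul, ← smul_eq_C_mul, map_smul, toricMap_X]
    exact Finset.sum_congr rfl fun i _ => by
      rw [← smul_mul_assoc, Polynomial.smul_C, smul_monomial, smul_eq_mul, mul_one]
  rw [hmap, Polynomial.coeff_C_mul, Polynomial.coeff_X]
  split_ifs with he
  · rwa [← he, mul_one, Nat.cast_one]
  · simp

theorem X_mem_lowerIdeal {i : ι} (hi : ν (v i) < 1) : X i ∈ lowerIdeal hν hv h := by
  have hmem : monomial (v i) (1 : R) ∈ lowerPart ν h 1 :=
    Submodule.mem_sup_left ((monomial_mem_restrictSupport R).2 (Or.inl hi))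
  have hsum := sum_C_mul_X_mem_lowerIdeal (hν := hν) (hv := hv) (h := h) (s := {i}) (c := 1)
    (by rwa [Finset.sum_singleton, Pi.one_apply])
  rwa [Finset.sum_singleton, Pi.one_apply, C_1, one_mul] at hsum

theorem monomial_nsmul_mem_lowerPart {i : ι} {N : ℕ} (hX : X i ^ N ∈ lowerIdeal hν hv h) :
    monomial (N • v i) 1 ∈ lowerPart ν h N := by
  have hN := hX N
  rwa [map_pow, toricMap_X, mul_pow, ← Polynomial.C_pow, monomial_pow, one_pow,
    Polynomial.coeff_C_mul, Polynomial.coeff_X_pow_self, mul_one] at hN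

end LowerIdeal

theorem exists_forall_pow_mem_of_zeroLocus_subset {ι K : Type*} [Field K] [IsAlgClosed K]
    [Finite ι] {I : Ideal (MvPolynomial ι K)} (hI : ∀ χ ∈ zeroLocus K I, χ = 0) :
    ∃ N, ∀ i, X i ^ N ∈ I := by
  have := Fintype.ofFinite ι
  have hrad : ∀ i, ∃ k, X i ^ k ∈ I := fun i => by
    rw [← Ideal.mem_radical_iff, ← vanishingIdeal_zeroLocus_eq_radical (K := K),
      mem_vanishingIdeal_iff]
    intro χ hχ
    rw [hI χ hχ, aeval_X, Pi.zero_apply]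
  choose k hk using hrad
  exact ⟨∑ i, k i, fun i => I.pow_mem_of_pow_mem (hk i)
    (Finset.single_le_sum (fun _ _ => Nat.zero_le _) (Finset.mem_univ i))⟩

/-! ### Nondegeneracy -/

section Relations

variable {σ ι K : Type*} [Fintype ι] [Field K] {v : ι → σ →₀ ℕ} {χ : ι → K}

theorem prod_pow_toNat_eq_prod_pow_toNat_neg
    (hχ : ∀ d b : ι → ℕ, ∑ i, d i • v i = ∑ i, b i • v i → ∑ i, d i = ∑ i, b i →
      ∏ i, χ i ^ d i = ∏ i, χ i ^ b i)
    {z : ι → ℤ} (hz : ∀ k, ∑ i, z i * v i k = 0) (hz0 : ∑ i, z i = 0) :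
    ∏ i, χ i ^ (z i).toNat = ∏ i, χ i ^ (-z i).toNat := by
  refine hχ _ _ (Finsupp.ext fun k => ?_) ?_
  · rw [← Nat.cast_inj (R := ℤ), ← sub_eq_zero, ← hz k]
    simp only [Finsupp.finsetSum_apply, Finsupp.smul_apply, smul_eq_mul, Nat.cast_sum, Nat.cast_mul,
      ← Finset.sum_sub_distrib, ← sub_mul, Int.toNat_sub_toNat_neg]
  · rw [← Nat.cast_inj (R := ℤ), ← sub_eq_zero, ← hz0]
    simp only [Nat.cast_sum, ← Finset.sum_sub_distrib, Int.toNat_sub_toNat_neg]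

theorem exists_support_eq_face [Fintype σ]
    (hχ : ∀ d b : ι → ℕ, ∑ i, d i • v i = ∑ i, b i • v i → ∑ i, d i = ∑ i, b i →
      ∏ i, χ i ^ d i = ∏ i, χ i ^ b i) :
    ∃ (a : σ → ℚ) (c : ℚ), (∀ i, χ i ≠ 0 → ∑ k, a k * v i k = c) ∧
      ∀ i, χ i = 0 → ∑ k, a k * v i k < c := by
  obtain ⟨a, c, heq, hlt⟩ | ⟨z, hz, ⟨i, hi, hzi⟩, hzv, hz0⟩ :=
    exists_forall_sum_mul_lt_or_exists_int_relation v {i | χ i ≠ 0}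
  · exact ⟨a, c, heq, fun i hi => hlt i (not_not_intro hi)⟩
  · have hrel := prod_pow_toNat_eq_prod_pow_toNat_neg hχ hzv hz0
    have hleft : ∏ i, χ i ^ (z i).toNat = 0 := Finset.prod_eq_zero (Finset.mem_univ i) <| by
      rw [not_not.1 hi, zero_pow (by omega)]
    have hright : ∏ i, χ i ^ (-z i).toNat ≠ 0 := Finset.prod_ne_zero_iff.2 fun j _ => by
      by_cases hj : χ j = 0
      · rw [Int.toNat_of_nonpos (neg_nonpos.2 (hz j (not_not_intro hj))), pow_zero]
        exact one_ne_zero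
      · exact pow_ne_zero _ hj
    exact absurd (hrel ▸ hleft) hright

theorem sum_eq_zero_of_sum_mul_eq_zero [Fintype σ] {z : ι → ℤ} (hz : ∀ k, ∑ i, z i * v i k = 0)
    {a : σ → ℚ} {c : ℚ} (hc : c ≠ 0) (ha : ∀ i, z i ≠ 0 → ∑ k, a k * v i k = c) :
    ∑ i, z i = 0 := by
  have hmul : c * ∑ i, (z i : ℚ) = 0 := by
    calc c * ∑ i, (z i : ℚ) = ∑ i, ∑ k, a k * ((z i * v i k : ℤ) : ℚ) := by
          rw [Finset.mul_sum]
          refine Finset.sum_congr rfl fun i _ => ?_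
          obtain hi | hi := eq_or_ne (z i) 0
          · simp [hi]
          · rw [← ha i hi, Finset.sum_mul]
            push_cast
            exact Finset.sum_congr rfl fun k _ => by ring
      _ = ∑ k, a k * ((∑ i, z i * v i k : ℤ) : ℚ) := by
          rw [Finset.sum_comm]
          push_cast
          simp only [Finset.mul_sum]
      _ = 0 := by simp [hz]
  exact_mod_cast (mul_eq_zero.1 hmul).resolve_left hc

theorem exists_torus_point [Fintype σ] [IsAlgClosed K]
    (hχ : ∀ d b : ι → ℕ, ∑ i, d i • v i = ∑ i, b i • v i → ∑ i, d i = ∑ i, b i →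
      ∏ i, χ i ^ d i = ∏ i, χ i ^ b i)
    {a : σ → ℚ} {c : ℚ} (hc : c ≠ 0) (ha : ∀ i, χ i ≠ 0 → ∑ k, a k * v i k = c) :
    ∃ x : σ → Kˣ, ∀ i, χ i ≠ 0 → ∏ k, (x k : K) ^ v i k = χ i := by
  classical
  let v' : ι → σ → ℤ := fun i k => if χ i = 0 then 0 else v i k
  let χ' : ι → Kˣ := fun i => if hi : χ i = 0 then 1 else Units.mk0 (χ i) hi
  suffices hrel : ∀ z : ι → ℤ, ∑ i, z i • v' i = 0 → ∏ i, χ' i ^ z i = 1 by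
    obtain ⟨x, hx⟩ := exists_units_prod_zpow_eq v' χ' hrel
    exact ⟨x, fun i hi => by simpa [v', χ', hi] using congrArg Units.val (hx i)⟩
  intro z hz
  let z' : ι → ℤ := fun i => if χ i = 0 then 0 else z i
  have hz' : ∀ k, ∑ i, z' i * v i k = 0 := fun k => by
    simpa [z', v', ite_mul] using congrFun hz k
  have hz'0 : ∑ i, z' i = 0 := sum_eq_zero_of_sum_mul_eq_zero hz' hc fun i hi =>
    ha i fun h => hi (if_pos h)
  have hfactor : ∀ i, ((χ' i ^ z i : Kˣ) : K) = χ i ^ (z' i).toNat / χ i ^ (-z' i).toNat :=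
    fun i => by
      by_cases hi : χ i = 0
      · simp [z', χ', hi]
      · simp only [z', χ', dif_neg hi, if_neg hi]
        rw [Units.val_zpow_eq_zpow_val, Units.val_mk0, ← zpow_natCast, ← zpow_natCast,
          ← zpow_sub₀ hi, Int.toNat_sub_toNat_neg]
  refine Units.ext ?_
  rw [Units.coe_prod, Finset.prod_congr rfl fun i _ => hfactor i, Finset.prod_div_distrib,
    prod_pow_toNat_eq_prod_pow_toNat_neg hχ hz' hz'0]
  refine div_self (Finset.prod_ne_zero_iff.2 fun i _ => ?_)
  by_cases hi : χ i = 0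
  · simp [z', hi]
  · exact pow_ne_zero _ hi

end Relations

section Nondegenerate

variable {σ : Type*} {f : MvPolynomial σ ℂ}

theorem nbFace_of_le {l : (σ → ℝ) →ₗ[ℝ] ℝ} {c : ℝ} (hc : 0 < c)
    (hle : ∀ v ∈ originSupport f, l (toR v) ≤ c) (heq : ∃ v ∈ originSupport f, l (toR v) = c) :
    NBFace f {x ∈ newtonPolytope f | l x = c} := by
  have hP : newtonPolytope f ⊆ {x | l x ≤ c} := by
    rw [newtonPolytope_eq]
    exact convexHull_min (Set.forall_mem_image.2 hle) (convex_halfSpace_le l.isLinear c)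
  obtain ⟨v, hv, hvc⟩ := heq
  refine ⟨⟨⟨toR v, toR_mem_newtonPolytope hv, hvc⟩, l, c, hP, rfl⟩, fun h => hc.ne ?_⟩
  rw [← h.2, map_zero]

theorem coeff_X_mul_pderiv {R : Type*} [CommSemiring R] (p : MvPolynomial σ R) (i : σ)
    (m : σ →₀ ℕ) : coeff m (X i * pderiv i p) = m i * coeff m p := by
  classical
  induction p using MvPolynomial.induction_on' with
  | monomial s a =>
    rw [X_mul_pderiv_monomial, coeff_smul, coeff_monomial, nsmul_eq_mul]
    split_ifs with h
    · rw [h]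
    · simp
  | add p q hp hq => rw [map_add, mul_add, coeff_add, hp, hq, coeff_add, mul_add]

theorem support_X_mul_pderiv_subset (i : σ) : (X i * pderiv i f).support ⊆ originSupport f :=
  fun m hm => mem_originSupport_of_mem_support <| mem_support_iff.2 <| by
    rw [mem_support_iff, coeff_X_mul_pderiv] at hm
    exact right_ne_zero_of_mul hm

theorem X_mul_pderiv_mem_weightLE (f : MvPolynomial σ ℂ) (i : σ) :
    X i * pderiv i f ∈ weightLE ℂ (fun m => nu f (toR m)) 1 :=
  fun _ hm => nu_le_one (support_X_mul_pderiv_subset i hm)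

open Classical in
theorem eval_faceRestrict [Fintype σ] {Δ : Set (σ → ℝ)} {g : MvPolynomial σ ℂ}
    {s : Finset (σ →₀ ℕ)} (hs : g.support ⊆ s) (x : σ → ℂ) :
    eval x (faceRestrict Δ g) =
      ∑ m ∈ s, if toR m ∈ Δ then coeff m g * ∏ k, x k ^ m k else 0 := by
  rw [faceRestrict, map_sum, Finset.sum_subset hs fun m _ hm => by simp [notMem_support_iff.1 hm]]
  refine Finset.sum_congr rfl fun m _ => ?_
  split_ifs
  · rw [eval_monomial, Finsupp.prod_fintype _ _ fun _ => pow_zero _]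
  · exact map_zero _

/-- The `lowerIdeal` of the logarithmic derivatives of `f`, in the variables indexed by the points
spanning the Newton polytope. -/
noncomputable def Convenient.lowerIdeal (hf : Convenient f) :
    Ideal (MvPolynomial (originSupport f) ℂ) :=
  ToricNewton.lowerIdeal (ν := fun m => nu f (toR m)) (v := Subtype.val) hf.nu_add_le
    (fun v => nu_le_one v.2) fun i => X i * pderiv i f

variable {hf : Convenient f} {χ : originSupport f → ℂ}

theorem prod_pow_eq_of_mem_zeroLocus (hχ : χ ∈ zeroLocus ℂ hf.lowerIdeal)
    (d b : originSupport f → ℕ) (hvec : ∑ v, d v • v.1 = ∑ v, b v • v.1)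
    (hdeg : ∑ v, d v = ∑ v, b v) : ∏ v, χ v ^ d v = ∏ v, χ v ^ b v := by
  have hmem : ∏ v, X v ^ d v - ∏ v, X v ^ b v ∈ hf.lowerIdeal :=
    prod_X_pow_sub_mem_lowerIdeal hvec hdeg
  simpa [sub_eq_zero] using hχ _ hmem

theorem apply_zero_of_mem_zeroLocus (hχ : χ ∈ zeroLocus ℂ hf.lowerIdeal) :
    χ ⟨0, zero_mem_originSupport⟩ = 0 := by
  have hlt : nu f (toR (0 : σ →₀ ℕ)) < 1 := by
    rw [toR_zero, nu, gauge_zero]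
    exact one_pos
  have hmem : X ⟨0, zero_mem_originSupport⟩ ∈ hf.lowerIdeal := X_mem_lowerIdeal hlt
  simpa using hχ _ hmem

theorem X_mul_pderiv_mem_lowerPart (f : MvPolynomial σ ℂ) (i : σ) :
    X i * pderiv i f ∈ lowerPart (fun m => nu f (toR m)) (fun i => X i * pderiv i f) 1 := by
  have hle : nu f (toR (0 : σ →₀ ℕ)) ≤ 1 - 1 := by
    rw [toR_zero, nu, gauge_zero, sub_self]
  have hspan := (filteredSpan_le_iff (ν := fun m => nu f (toR m))
    (h := fun i => X i * pderiv i f)).1 le_rfl i (Set.mem_univ i) 0 hle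
  rw [← one_def, mul_one] at hspan
  exact Submodule.mem_sup_right hspan

theorem sum_coeff_mul_of_mem_zeroLocus (hχ : χ ∈ zeroLocus ℂ hf.lowerIdeal) (i : σ) :
    ∑ v, coeff v.1 (X i * pderiv i f) * χ v = 0 := by
  have hsum : ∑ v : originSupport f, monomial v.1 (coeff v.1 (X i * pderiv i f)) =
      X i * pderiv i f := by
    rw [Finset.sum_coe_sort (originSupport f) fun v => monomial v (coeff v (X i * pderiv i f)),
      ← Finset.sum_subset (support_X_mul_pderiv_subset i) fun v _ hv => by
        rw [notMem_support_iff.1 hv, monomial_zero]]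
    exact support_sum_monomial_coeff _
  have hmem : ∑ v, C (coeff v.1 (X i * pderiv i f)) * X v ∈ hf.lowerIdeal :=
    sum_C_mul_X_mem_lowerIdeal (hsum.symm ▸ X_mul_pderiv_mem_lowerPart f i)
  simpa only [map_sum, map_mul, aeval_X, aeval_C, Algebra.algebraMap_self_apply] using hχ _ hmem

theorem exists_nbFace_torus_point [Fintype σ] (hχ : χ ∈ zeroLocus ℂ hf.lowerIdeal) (hne : χ ≠ 0) :
    ∃ Δ, NBFace f Δ ∧ (∀ v, toR v.1 ∈ Δ ↔ χ v ≠ 0) ∧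
      ∃ x : σ → ℂˣ, ∀ v, χ v ≠ 0 → ∏ k, (x k : ℂ) ^ v.1 k = χ v := by
  obtain ⟨w, hw⟩ := Function.ne_iff.1 hne
  have hrel := prod_pow_eq_of_mem_zeroLocus hχ
  obtain ⟨a, c, heq, hlt⟩ := exists_support_eq_face hrel
  have hc : 0 < c := by simpa using hlt _ (apply_zero_of_mem_zeroLocus hχ)
  let l : (σ → ℝ) →ₗ[ℝ] ℝ := ∑ k, (a k : ℝ) • LinearMap.proj k
  have hl : ∀ v, l (toR v) = ((∑ k, a k * v k : ℚ) : ℝ) := fun v => by simp [l, toR]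
  refine ⟨{y ∈ newtonPolytope f | l y = c}, ?_, fun v => ⟨fun h h0 => (hlt v h0).ne ?_, fun h =>
    ⟨toR_mem_newtonPolytope v.2, ?_⟩⟩, exists_torus_point hrel hc.ne' heq⟩
  · refine nbFace_of_le (by exact_mod_cast hc) (fun v hv => ?_) ⟨w, w.2, ?_⟩
    · rw [hl, Rat.cast_le]
      by_cases h0 : χ ⟨v, hv⟩ = 0
      · exact (hlt _ h0).le
      · exact (heq _ h0).le
    · rw [hl, heq w hw]
  · exact_mod_cast (hl v).symm.trans h.2
  · rw [hl, heq v h]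

theorem Nondegenerate.eq_zero_of_mem_zeroLocus [Finite σ] (hnd : Nondegenerate f)
    (hχ : χ ∈ zeroLocus ℂ hf.lowerIdeal) : χ = 0 := by
  by_contra hne
  cases nonempty_fintype σ
  obtain ⟨Δ, hΔ, hmem, x, hx⟩ := exists_nbFace_torus_point hχ hne
  refine hnd Δ hΔ ⟨fun k => x k, fun k => (x k).ne_zero, fun i => ?_⟩
  rw [eval_faceRestrict (support_X_mul_pderiv_subset i), ← Finset.sum_coe_sort]
  refine (Finset.sum_congr rfl fun v _ => ?_).trans (sum_coeff_mul_of_mem_zeroLocus hχ i)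
  split_ifs with hv
  · rw [hx v ((hmem v).1 hv)]
  · rw [not_not.1 (mt (hmem v).2 hv), mul_zero]

theorem Nondegenerate.exists_monomial_nsmul_mem_lowerPart [Finite σ] (hnd : Nondegenerate f)
    (hf : Convenient f) : ∃ N : ℕ, ∀ v ∈ originSupport f, monomial (N • v) 1 ∈
      lowerPart (fun m => nu f (toR m)) (fun i => X i * pderiv i f) N := by
  obtain ⟨N, hN⟩ := exists_forall_pow_mem_of_zeroLocus_subset
    fun χ (hχ : χ ∈ zeroLocus ℂ hf.lowerIdeal) => hnd.eq_zero_of_mem_zeroLocus hχ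
  exact ⟨N, fun v hv => monomial_nsmul_mem_lowerPart (v := Subtype.val) (hν := hf.nu_add_le)
    (i := ⟨v, hv⟩) (hN ⟨v, hv⟩)⟩

theorem Nondegenerate.filteredRegular [Fintype σ] [DecidableEq σ] (hnd : Nondegenerate f)
    (hf : Convenient f) :
    FilteredRegular (fun m => nu f (toR m)) fun i => X i * pderiv i f := by
  obtain ⟨N, hN⟩ := hnd.exists_monomial_nsmul_mem_lowerPart hf
  exact ToricNewton.filteredRegular hf.isNewtonWeight le_rfl (X_mul_pderiv_mem_weightLE f) hN

theorem nu_congr {g : MvPolynomial σ ℂ} (hP : newtonPolytope f = newtonPolytope g) :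
    nu f = nu g := by
  unfold nu
  rw [hP]

end Nondegenerate

end ToricNewton

open ToricNewton in
/-- the toric Newton spectrum of a convenient and Newton nondegenerate
polynomial depends only on its Newton polytope. -/
theorem toric_newton_spectrum_depends_only_on_polytope {n : ℕ} (hn : 1 ≤ n)
    (f g : MvPolynomial (Fin n) ℂ)
    (hcf : Convenient f) (hnf : Nondegenerate f)
    (hcg : Convenient g) (hng : Nondegenerate g)
    (hP : newtonPolytope f = newtonPolytope g) :
    ∀ α : ℚ, grDim f (α : ℝ) = grDim g (α : ℝ) := by
  intro α
  have hnu : nu g = nu f := nu_congr hP.symm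
  have hreg := hnf.filteredRegular hcf
  have hreg' := hng.filteredRegular hcg
  have hone := X_mul_pderiv_mem_weightLE f
  have hone' := X_mul_pderiv_mem_weightLE g
  have hgr := hreg.finrank_gr_eq (hnu ▸ hreg') hcf.nu_add_le hcf.isNewtonWeight.finite_setOf_le
    hone (hnu ▸ hone') α
  calc grDim f α = _ := hgr
    _ = grDim g α := by rw [← hnu]; rfl
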